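/- arXiv:0907.1792 — 4 statements merged into one kernel-verified Lean document; each statement's English description precedes it below -/
import Mathlib

section
/- Let E₀ be a positive operator measure on the Borel sets of ℝ with values in the bounded operators on L²(ℝ) satisfying: (a) the time-covariance condition e^{itH₀} E₀(B) e^{-itH₀} = E₀(B+t) for all Borel B and all t ∈ ℝ, where e^{-itH₀} := F* e^{-itM²} F and e^{-itM²} is multiplication by k ↦ e^{-itk²}; (b) E₀(ℝ) = F* χ_{[0,∞)}(M) F (the projection onto positive momenta), so that in particular E₀(B) ≤ F* χ_{[0,∞)}(M) F for all B. Let T : ℝ → ℂ be measurable and suppose there exists T̃ : {ω ∈ ℂ : Im ω ≥ 0} → ℂ continuous, analytic on {Im ω > 0}, with |T̃(ω)| ≤ 1 everywhere and T̃(k) = T(k) for all k ≥ 0. Then for every t ∈ ℝ, T(P)* E₀((−∞,t]) T(P) ≤ E₀((−∞,t]), where T(P) := F* T(M) F and T(M) is multiplication by T. -/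
open MeasureTheory Complex Filter Set
open scoped ENNReal NNReal

noncomputable section

/-- `L²(ℝ)` with respect to Lebesgue measure. -/
abbrev H2 : Type := Lp ℂ 2 (volume : Measure ℝ)

/-- `𝓕` is the Fourier–Plancherel operator: a unitary on `L²(ℝ)` which is given on
`L¹ ∩ L²` by the usual integral formula `(𝓕φ)(y) = (2π)^{-1/2} ∫ e^{-iyx} φ(x) dx`, and whose
inverse `𝓕* = 𝓕⁻¹` is given on `L¹ ∩ L²` by `(𝓕*φ)(y) = (2π)^{-1/2} ∫ e^{iyx} φ(x) dx`. -/
def IsFourier (𝓕 : H2 ≃ₗᵢ[ℂ] H2) : Prop :=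
  (∀ φ : H2, Integrable (⇑φ) volume →
      (⇑(𝓕 φ) : ℝ → ℂ) =ᵐ[volume]
        fun y : ℝ => (Real.sqrt (2 * Real.pi) : ℂ)⁻¹ *
          ∫ x : ℝ, Complex.exp (-(Complex.I * y * x)) * φ x) ∧
  (∀ φ : H2, Integrable (⇑φ) volume →
      (⇑(𝓕.symm φ) : ℝ → ℂ) =ᵐ[volume]
        fun y : ℝ => (Real.sqrt (2 * Real.pi) : ℂ)⁻¹ *
          ∫ x : ℝ, Complex.exp (Complex.I * y * x) * φ x)

/-- The multiplication operator `g(M)` on `L²`: `φ ↦ g·φ` (pointwise product), defined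
whenever the product is again in `L²`. -/
def mulLp {μ : Measure ℝ} (g : ℝ → ℂ) (φ : Lp ℂ 2 μ) : Lp ℂ 2 μ := by
  classical exact if h : MemLp (fun x => g x * φ x) 2 μ then h.toLp _ else 0

/-- A positive operator measure (POM) on the Borel sets of `ℝ` with values in the bounded
operators on a Hilbert space `K`: `0 ≤ E(B) ≤ I`, `E(∅) = 0`, and `E` is σ-additive in the
strong operator topology. -/
structure POM (K : Type) [NormedAddCommGroup K] [InnerProductSpace ℂ K] [CompleteSpace K] where
  toFun : Set ℝ → K →L[ℂ] K
  pos : ∀ B : Set ℝ, (toFun B).IsPositive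
  le_one : ∀ B : Set ℝ, (ContinuousLinearMap.id ℂ K - toFun B).IsPositive
  empty : toFun ∅ = 0
  sigma_additive : ∀ f : ℕ → Set ℝ, (∀ n, MeasurableSet (f n)) →
    Pairwise (Function.onFun Disjoint f) →
    ∀ φ : K, HasSum (fun n => toFun (f n) φ) (toFun (⋃ n, f n) φ)

/-- The free Schrödinger evolution `e^{-itH₀} = F* e^{-itM²} F` on `L²(ℝ)`. -/
def freeEvol (𝓕 : H2 ≃ₗᵢ[ℂ] H2) (t : ℝ) (φ : H2) : H2 :=
  𝓕.symm (mulLp (fun k : ℝ => Complex.exp (-(Complex.I * t * k ^ 2))) (𝓕 φ))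

open Polynomial
open scoped Topology

/-!
Write `‖S φ‖² = ⟪φ, E((-∞, t]) φ⟫` with `S` bounded. Covariance and monotonicity of `E` say that
`‖S e^{isM²} φ‖ ≤ ‖S φ‖` (in momentum space) for `s > 0`: the seminorm `‖S ·‖` is contracted by
`V = e^{isM²}`. Von Neumann's inequality holds for such a seminorm: with the defect operator `R`,
`‖R x‖² = ‖S x‖² - ‖S V x‖²`, both sides telescope along the orbit of `V`, and on orbits `p(V)` acts
as a Toeplitz operator of norm at most `max_{|z| = 1} |p(z)|`, by Parseval's identity on a long
cycle. Hence `‖S h(V) φ‖ ≤ sup |h| ‖S φ‖` for every `h` holomorphic near the closed unit disc.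

Apply this to `h(z) = T̃(√w)` with `w = (i / s) (1 + s² - z)`. This `w` lies in the upper half-plane
for `z` in the disc, and tends to `k²` for `z = e^{isk²}` and `s → 0⁺`, so in the limit
`‖S T̃(|M|) φ‖ ≤ ‖S φ‖`. Finally `S` vanishes on negative momenta because of `E(ℝ)`, and on
nonnegative ones `T̃(|k|) = T(k)`.
-/

section CyclicToeplitz

variable {E : Type*} [NormedAddCommGroup E] [InnerProductSpace ℂ E] {N : ℕ} [NeZero N]

theorem sum_stdAddChar_smul_dft (Φ : ZMod N → E) (j : ZMod N) :
    ∑ k, ZMod.stdAddChar (j * k) • ZMod.dft Φ k = (N : ℂ) • Φ j := by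
  have inversion := congrFun (ZMod.dft_dft Φ) (-j)
  rw [ZMod.dft_apply, neg_neg] at inversion
  simpa only [mul_neg, neg_neg, mul_comm] using inversion

theorem sum_inner_dft_dft (Φ Ψ : ZMod N → E) :
    ∑ k, inner ℂ (ZMod.dft Φ k) (ZMod.dft Ψ k) = N * ∑ j, inner ℂ (Φ j) (Ψ j) := by
  calc ∑ k, inner ℂ (ZMod.dft Φ k) (ZMod.dft Ψ k)
      = ∑ k, ∑ j, inner ℂ (ZMod.stdAddChar (j * k) • ZMod.dft Φ k) (Ψ j) := by
        refine Finset.sum_congr rfl fun k _ => ?_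
        simp_rw [ZMod.dft_apply Ψ k, inner_sum, inner_smul_left, inner_smul_right,
          AddChar.map_neg_eq_conj]
    _ = ∑ j, inner ℂ ((N : ℂ) • Φ j) (Ψ j) := by
        rw [Finset.sum_comm]
        simp_rw [← sum_inner, sum_stdAddChar_smul_dft]
    _ = N * ∑ j, inner ℂ (Φ j) (Ψ j) := by
        simp only [inner_smul_left, map_natCast, Finset.mul_sum]

theorem sum_norm_sq_dft (Φ : ZMod N → E) :
    ∑ k, ‖ZMod.dft Φ k‖ ^ 2 = N * ∑ j, ‖Φ j‖ ^ 2 := by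
  have parseval := sum_inner_dft_dft Φ Φ
  simp only [inner_self_eq_norm_sq_to_K, coe_algebraMap] at parseval
  exact_mod_cast parseval

theorem dft_sum_coeff_smul_shift (p : ℂ[X]) (a : ZMod N → E) (j : ZMod N) :
    ZMod.dft (fun n : ZMod N => ∑ k ∈ Finset.range (p.natDegree + 1), p.coeff k • a (n + k)) j =
      p.eval (ZMod.stdAddChar j) • ZMod.dft a j := by
  have dft_shift (k : ℕ) : ∑ n, ZMod.stdAddChar (-(n * j)) • a (n + k) =
      (ZMod.stdAddChar j : ℂ) ^ k • ZMod.dft a j := by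
    rw [ZMod.dft_apply, Finset.smul_sum]
    refine Fintype.sum_equiv (Equiv.addRight (k : ZMod N)) _ _ fun n => ?_
    rw [Equiv.coe_addRight, smul_smul, ← AddChar.map_nsmul_eq_pow, nsmul_eq_mul,
      ← AddChar.map_add_eq_mul]
    ring_nf
  rw [ZMod.dft_apply, eval_eq_sum_range, Finset.sum_smul]
  simp_rw [Finset.smul_sum, smul_comm _ (p.coeff _)]
  rw [Finset.sum_comm]
  simp_rw [← Finset.smul_sum, dft_shift, smul_smul]

theorem sum_norm_sq_cyclic_toeplitz_le {p : ℂ[X]} {M : ℝ}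
    (hp : ∀ z : ℂ, ‖z‖ = 1 → ‖p.eval z‖ ≤ M) (a : ZMod N → E) :
    ∑ n, ‖∑ k ∈ Finset.range (p.natDegree + 1), p.coeff k • a (n + k)‖ ^ 2 ≤
      M ^ 2 * ∑ n, ‖a n‖ ^ 2 := by
  have hN : (0 : ℝ) < N := Nat.cast_pos.2 (NeZero.pos N)
  refine le_of_mul_le_mul_left ?_ hN
  rw [← sum_norm_sq_dft, mul_left_comm, ← sum_norm_sq_dft, Finset.mul_sum]
  refine Finset.sum_le_sum fun j _ => ?_
  rw [dft_sum_coeff_smul_shift, norm_smul, mul_pow]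
  gcongr
  exact hp _ (AddChar.norm_apply _ _)

end CyclicToeplitz

section VonNeumann

variable {E : Type*} [NormedAddCommGroup E] [InnerProductSpace ℂ E]

theorem sum_norm_sq_toeplitz_le {p : ℂ[X]} {M : ℝ} (hp : ∀ z : ℂ, ‖z‖ = 1 → ‖p.eval z‖ ≤ M)
    (a : ℕ → E) (N : ℕ) :
    ∑ i ∈ Finset.range N, ‖∑ k ∈ Finset.range (p.natDegree + 1), p.coeff k • a (i + k)‖ ^ 2 ≤
      M ^ 2 * ∑ i ∈ Finset.range (N + p.natDegree + 1), ‖a i‖ ^ 2 := by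
  -- On a cycle of this length the first `N` windows do not wrap around.
  set L := N + p.natDegree + 1
  have sum_val (f : ℕ → ℝ) : ∑ n : ZMod L, f n.val = ∑ i ∈ Finset.range L, f i :=
    Fin.sum_univ_eq_sum_range f L
  rw [← sum_val]
  refine le_trans ?_ (sum_norm_sq_cyclic_toeplitz_le hp fun n : ZMod L => a n.val)
  have window (n : ZMod L) (hn : n.val < N) :
      ∑ k ∈ Finset.range (p.natDegree + 1), p.coeff k • a (n + k : ZMod L).val =
        ∑ k ∈ Finset.range (p.natDegree + 1), p.coeff k • a (n.val + k) := by
    refine Finset.sum_congr rfl fun k hk => ?_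
    have hk' := Finset.mem_range.1 hk
    rw [ZMod.val_add, ZMod.val_natCast, Nat.add_mod_mod, Nat.mod_eq_of_lt (by omega)]
  let b (i : ℕ) : ℝ :=
    ‖∑ k ∈ Finset.range (p.natDegree + 1), p.coeff k • a (i + k)‖ ^ 2
  calc ∑ i ∈ Finset.range N, b i
      = ∑ i ∈ Finset.range L, if i < N then b i else 0 := by
        rw [← Finset.sum_filter]
        congr 1
        ext i
        simp only [Finset.mem_range, Finset.mem_filter]
        omega
    _ = ∑ n : ZMod L, if n.val < N then b n.val else 0 := (sum_val _).symm
    _ ≤ _ := by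
        refine Finset.sum_le_sum fun n _ => ?_
        split_ifs with hn
        · rw [window n hn]
        · positivity

variable {H H' : Type*} [NormedAddCommGroup H] [InnerProductSpace ℂ H] [CompleteSpace H]
  [NormedAddCommGroup H'] [InnerProductSpace ℂ H'] [CompleteSpace H']

theorem exists_norm_sq_eq_re_inner {D : H →L[ℂ] H} (hD : D.IsPositive) :
    ∃ R : H →L[ℂ] H, ∀ x, ‖R x‖ ^ 2 = (inner ℂ x (D x)).re := by
  obtain ⟨R, rfl⟩ := CStarAlgebra.nonneg_iff_eq_star_mul_self.1
    ((ContinuousLinearMap.nonneg_iff_isPositive D).2 hD)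
  exact ⟨R, fun x => R.apply_norm_sq_eq_inner_adjoint_right x⟩

theorem exists_defect_operator (S : H →L[ℂ] H') {X : H →L[ℂ] H} (hX : ∀ x, ‖S (X x)‖ ≤ ‖S x‖) :
    ∃ R : H →L[ℂ] H, ∀ x, ‖R x‖ ^ 2 = ‖S x‖ ^ 2 - ‖S (X x)‖ ^ 2 := by
  let D : H →L[ℂ] H := S.adjoint ∘L S - (S ∘L X).adjoint ∘L (S ∘L X)
  have inner_D (x : H) : inner ℂ (D x) x = ((‖S x‖ ^ 2 - ‖S (X x)‖ ^ 2 : ℝ) : ℂ) := by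
    simp [D, ContinuousLinearMap.adjoint_inner_left, inner_self_eq_norm_sq_to_K]
  have hD : D.IsPositive := by
    rw [ContinuousLinearMap.isPositive_iff_complex]
    intro x
    rw [inner_D]
    exact ⟨rfl, sub_nonneg.2 (pow_le_pow_left₀ (norm_nonneg _) (hX x) 2)⟩
  obtain ⟨R, hR⟩ := exists_norm_sq_eq_re_inner hD
  exact ⟨R, fun x => by rw [hR, ← inner_conj_symm, inner_D, conj_ofReal, ofReal_re]⟩

theorem norm_sq_aeval_sub_le {S : H →L[ℂ] H'} {X : H →L[ℂ] H} (hX : ∀ x, ‖S (X x)‖ ≤ ‖S x‖)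
    {p : ℂ[X]} {M : ℝ} (hp : ∀ z : ℂ, ‖z‖ = 1 → ‖p.eval z‖ ≤ M) (x : H) (N : ℕ) :
    ‖S (aeval X p x)‖ ^ 2 - ‖S ((X ^ N) (aeval X p x))‖ ^ 2 ≤ M ^ 2 * ‖S x‖ ^ 2 := by
  obtain ⟨R, hR⟩ := exists_defect_operator S hX
  have telescope (y : H) (n : ℕ) :
      ∑ i ∈ Finset.range n, ‖R ((X ^ i) y)‖ ^ 2 = ‖S y‖ ^ 2 - ‖S ((X ^ n) y)‖ ^ 2 := by
    simp_rw [hR, ← mul_apply_eq_comp, ← pow_succ']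
    exact Finset.sum_range_sub' (fun i => ‖S ((X ^ i) y)‖ ^ 2) n
  have expand (i : ℕ) : R ((X ^ i) (aeval X p x)) =
      ∑ k ∈ Finset.range (p.natDegree + 1), p.coeff k • R ((X ^ (i + k)) x) := by
    simp [aeval_eq_sum_range, pow_add]
  calc ‖S (aeval X p x)‖ ^ 2 - ‖S ((X ^ N) (aeval X p x))‖ ^ 2
      ≤ M ^ 2 * ∑ i ∈ Finset.range (N + p.natDegree + 1), ‖R ((X ^ i) x)‖ ^ 2 := by
        rw [← telescope]
        simp_rw [expand]
        exact sum_norm_sq_toeplitz_le hp (fun i => R ((X ^ i) x)) N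
    _ ≤ M ^ 2 * ‖S x‖ ^ 2 := by
        rw [telescope]
        gcongr
        exact sub_le_self _ (sq_nonneg _)

theorem norm_aeval_le_of_strict_contraction {S : H →L[ℂ] H'} {X : H →L[ℂ] H} {ρ : ℝ}
    (hρ₀ : 0 ≤ ρ) (hρ₁ : ρ < 1) (hX : ∀ x, ‖S (X x)‖ ≤ ρ * ‖S x‖) {p : ℂ[X]} {M : ℝ}
    (hp : ∀ z : ℂ, ‖z‖ = 1 → ‖p.eval z‖ ≤ M) (x : H) :
    ‖S (aeval X p x)‖ ≤ M * ‖S x‖ := by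
  have hM : 0 ≤ M := (norm_nonneg _).trans (hp 1 norm_one)
  have norm_pow_le (y : H) (n : ℕ) : ‖S ((X ^ n) y)‖ ≤ ρ ^ n * ‖S y‖ := by
    induction n with
    | zero => simp
    | succ n ih =>
      calc ‖S ((X ^ (n + 1)) y)‖ ≤ ρ * ‖S ((X ^ n) y)‖ := by rw [pow_succ']; exact hX _
        _ ≤ ρ * (ρ ^ n * ‖S y‖) := by gcongr
        _ = ρ ^ (n + 1) * ‖S y‖ := by ring
  have tendsto_pow (y : H) : Tendsto (fun n => ‖S ((X ^ n) y)‖) atTop (𝓝 0) :=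
    squeeze_zero (fun _ => norm_nonneg _) (norm_pow_le y)
      (by simpa using (tendsto_pow_atTop_nhds_zero_of_lt_one hρ₀ hρ₁).mul_const ‖S y‖)
  have le_sq : ‖S (aeval X p x)‖ ^ 2 ≤ M ^ 2 * ‖S x‖ ^ 2 := by
    have tendsto_defect := ((tendsto_pow (aeval X p x)).pow 2).const_sub (‖S (aeval X p x)‖ ^ 2)
    rw [zero_pow two_ne_zero, sub_zero] at tendsto_defect
    exact le_of_tendsto' tendsto_defect (norm_sq_aeval_sub_le
      (fun y => (hX y).trans (mul_le_of_le_one_left (norm_nonneg _) hρ₁.le)) hp x)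
  rw [← mul_pow] at le_sq
  exact le_of_sq_le_sq le_sq (by positivity)

theorem norm_aeval_le_of_contraction {S : H →L[ℂ] H'} {C : H →L[ℂ] H}
    (hC : ∀ x, ‖S (C x)‖ ≤ ‖S x‖) {p : ℂ[X]} {M : ℝ}
    (hp : ∀ z : ℂ, ‖z‖ = 1 → ‖p.eval z‖ ≤ M) (x : H) :
    ‖S (aeval C p x)‖ ≤ M * ‖S x‖ := by
  have shrunk_le (ρ : ℝ) (hρ : ρ ∈ Ioo (0 : ℝ) 1) :
      ‖S (aeval ((ρ : ℂ) • C) p x)‖ ≤ M * ‖S x‖ := by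
    refine norm_aeval_le_of_strict_contraction hρ.1.le hρ.2 (fun y => ?_) hp x
    rw [smul_apply, map_smul, norm_smul, Complex.norm_of_nonneg hρ.1.le]
    exact mul_le_mul_of_nonneg_left (hC y) hρ.1.le
  have continuous_shrunk : Continuous fun ρ : ℝ => ‖S (aeval ((ρ : ℂ) • C) p x)‖ := by
    have := p.continuous_aeval (A := H →L[ℂ] H)
    fun_prop
  have tendsto_shrunk := continuous_shrunk.continuousWithinAt (s := Iio 1) (x := 1) |>.tendsto
  rw [ofReal_one, one_smul] at tendsto_shrunk
  exact le_of_tendsto tendsto_shrunk (eventually_of_mem (Ioo_mem_nhdsLT one_pos) shrunk_le)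

end VonNeumann

section MulOp

variable {α : Type*} [MeasurableSpace α] {μ : Measure α}

/-- Multiplication by an essentially bounded function, as a bounded operator on `L²`. -/
def mulOp {g : α → ℂ} (hg : MemLp g ∞ μ) : Lp ℂ 2 μ →L[ℂ] Lp ℂ 2 μ :=
  (ContinuousLinearMap.mul ℂ ℂ).holderL μ ∞ 2 2 (hg.toLp g)

theorem coeFn_mulOp {g : α → ℂ} (hg : MemLp g ∞ μ) (φ : Lp ℂ 2 μ) :
    mulOp hg φ =ᵐ[μ] fun x => g x * φ x := by
  filter_upwards [(ContinuousLinearMap.mul ℂ ℂ).coeFn_holder (r := 2) (hg.toLp g) φ,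
    hg.coeFn_toLp] with x hx hgx
  rw [← hgx]
  exact hx

theorem mulLp_eq_mulOp {ν : Measure ℝ} {g : ℝ → ℂ} (hg : MemLp g ∞ ν) (φ : Lp ℂ 2 ν) :
    mulLp g φ = mulOp hg φ := by
  have hgφ : MemLp (fun x => g x * φ x) 2 ν := (Lp.memLp φ).mul hg
  rw [mulLp, dif_pos hgφ]
  exact Lp.ext (hgφ.coeFn_toLp.trans (coeFn_mulOp hg φ).symm)

theorem inner_mulOp_left {g : α → ℂ} (hg : MemLp g ∞ μ) (φ ψ : Lp ℂ 2 μ) :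
    inner ℂ (mulOp hg φ) ψ = inner ℂ φ (mulOp hg.star ψ) := by
  simp_rw [L2.inner_def]
  refine integral_congr_ae ?_
  filter_upwards [coeFn_mulOp hg φ, coeFn_mulOp hg.star ψ] with x hφ hψ
  rw [hφ, hψ, RCLike.inner_apply, RCLike.inner_apply, map_mul, Pi.star_apply, RCLike.star_def]
  ring

theorem coeFn_aeval_mulOp {v : α → ℂ} (hv : MemLp v ∞ μ) (p : ℂ[X]) (φ : Lp ℂ 2 μ) :
    aeval (mulOp hv) p φ =ᵐ[μ] fun x => p.eval (v x) * φ x := by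
  induction p using Polynomial.induction_on generalizing φ with
  | C c =>
    simpa [Algebra.algebraMap_eq_smul_one] using! Lp.coeFn_smul c φ
  | add p q hp hq =>
    rw [map_add, add_apply]
    filter_upwards [Lp.coeFn_add (aeval (mulOp hv) p φ) (aeval (mulOp hv) q φ), hp φ, hq φ]
      with x hadd hpx hqx
    rw [hadd, Pi.add_apply, hpx, hqx, eval_add, add_mul]
  | monomial n c ih =>
    rw [pow_succ, ← mul_assoc, map_mul, aeval_X, mul_apply_eq_comp]
    filter_upwards [ih (mulOp hv φ), coeFn_mulOp hv φ] with x hn hx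
    rw [hn, hx, eval_mul_X, mul_assoc]

theorem tendsto_lp_of_dominated {E : Type*} [NormedAddCommGroup E] {p : ℝ≥0∞} [Fact (1 ≤ p)]
    (hp : p ≠ ∞) {f : ℕ → Lp E p μ} {f₀ : Lp E p μ} {b : α → ℝ} (hb : MemLp b p μ)
    (hfb : ∀ n, ∀ᵐ x ∂μ, ‖f n x - f₀ x‖ ≤ b x)
    (hlim : ∀ᵐ x ∂μ, Tendsto (fun n => f n x) atTop (𝓝 (f₀ x))) :
    Tendsto f atTop (𝓝 f₀) := by
  have hp₀ : p ≠ 0 := (zero_lt_one.trans_le Fact.out).ne'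
  have hp_pos : 0 < p.toReal := ENNReal.toReal_pos hp₀ hp
  rw [Lp.tendsto_Lp_iff_tendsto_eLpNorm']
  simp_rw [eLpNorm_eq_lintegral_rpow_enorm_toReal hp₀ hp]
  have tendsto_lintegral :
      Tendsto (fun n => ∫⁻ x, ‖(f n - f₀ : α → E) x‖ₑ ^ p.toReal ∂μ) atTop (𝓝 0) := by
    rw [← lintegral_zero (μ := μ)]
    refine tendsto_lintegral_of_dominated_convergence' (fun x => ‖b x‖ₑ ^ p.toReal)
      (fun n => ?_) (fun n => ?_) ?_ ?_
    · exact ((Lp.aestronglyMeasurable (f n)).sub (Lp.aestronglyMeasurable f₀)).enorm.pow_const _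
    · filter_upwards [hfb n] with x hx
      gcongr
      exact enorm_le_iff_norm_le.2 (hx.trans (le_abs_self _))
    · exact (lintegral_rpow_enorm_lt_top_of_eLpNorm_lt_top hp₀ hp hb.2).ne
    · filter_upwards [hlim] with x hx
      have := ((hx.sub_const (f₀ x)).enorm.ennrpow_const p.toReal)
      simpa [hp_pos] using this
  simpa [hp_pos] using tendsto_lintegral.ennrpow_const (1 / p.toReal)

theorem tendsto_mulOp_apply {g : ℕ → α → ℂ} {g₀ : α → ℂ} (hg : ∀ n, MemLp (g n) ∞ μ)
    (hg₀ : MemLp g₀ ∞ μ) {c : ℝ} (hgc : ∀ n, ∀ᵐ x ∂μ, ‖g n x‖ ≤ c)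
    (hlim : ∀ᵐ x ∂μ, Tendsto (fun n => g n x) atTop (𝓝 (g₀ x))) (φ : Lp ℂ 2 μ) :
    Tendsto (fun n => mulOp (hg n) φ) atTop (𝓝 (mulOp hg₀ φ)) := by
  have hφ : ∀ᵐ x ∂μ, ∀ n, mulOp (hg n) φ x = g n x * φ x :=
    ae_all_iff.2 fun n => coeFn_mulOp (hg n) φ
  have hgc' : ∀ᵐ x ∂μ, ∀ n, ‖g n x‖ ≤ c := ae_all_iff.2 hgc
  refine tendsto_lp_of_dominated ENNReal.ofNat_ne_top
    (((Lp.memLp φ).norm.const_mul (2 * c))) (fun n => ?_) ?_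
  · filter_upwards [hφ, coeFn_mulOp hg₀ φ, hgc', hlim] with x hx hx₀ hc hgx
    have hc₀ : ‖g₀ x‖ ≤ c := le_of_tendsto' hgx.norm hc
    rw [hx, hx₀, ← sub_mul, norm_mul]
    gcongr
    linarith [norm_sub_le (g n x) (g₀ x), hc n]
  · filter_upwards [hφ, coeFn_mulOp hg₀ φ, hlim] with x hx hx₀ hgx
    simp_rw [hx, hx₀]
    exact hgx.mul_const _

end MulOp

section Holomorphic

variable {α : Type*} [MeasurableSpace α] {μ : Measure α}
  {H : Type*} [NormedAddCommGroup H] [InnerProductSpace ℂ H] [CompleteSpace H]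

theorem exists_polynomial_norm_eval_sub_le {h : ℂ → ℂ} {r : ℝ} (hr : 1 < r)
    (hh : DifferentiableOn ℂ h (Metric.ball 0 r)) {ε : ℝ} (hε : 0 < ε) :
    ∃ p : ℂ[X], ∀ z : ℂ, ‖z‖ ≤ 1 → ‖p.eval z - h z‖ ≤ ε := by
  obtain ⟨R, hR₁, hRr⟩ := exists_between hr
  lift R to ℝ≥0 using (zero_lt_one.trans hR₁).le
  norm_cast at hR₁
  have hseries := (hh.mono (Metric.closedBall_subset_ball hRr)).hasFPowerSeriesOnBall
    (zero_lt_one.trans hR₁)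
  obtain ⟨R', hR'₁, hR'R⟩ := exists_between hR₁
  obtain ⟨n, hn⟩ := (Metric.tendstoUniformlyOn_iff.1
    (hseries.tendstoUniformlyOn (ENNReal.coe_lt_coe.2 hR'R)) ε hε).exists
  let p : ℂ[X] := ∑ k ∈ Finset.range n, monomial k ((cauchyPowerSeries h 0 R).coeff k)
  have eval_p (z : ℂ) : p.eval z = (cauchyPowerSeries h 0 R).partialSum n z := by
    simp [p, eval_finsetSum, FormalMultilinearSeries.partialSum, mul_comm]
  refine ⟨p, fun z hz => ?_⟩
  have hzn := hn z (mem_ball_zero_iff.2 (hz.trans_lt (by exact_mod_cast hR'₁)))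
  rw [zero_add, dist_comm, dist_eq_norm, ← eval_p] at hzn
  exact hzn.le

theorem norm_mulOp_comp_le {S : Lp ℂ 2 μ →L[ℂ] H} {v : α → ℂ} (hv : MemLp v ∞ μ)
    (hv₁ : ∀ᵐ x ∂μ, ‖v x‖ ≤ 1) (hS : ∀ φ, ‖S (mulOp hv φ)‖ ≤ ‖S φ‖) {h : ℂ → ℂ} {r M : ℝ}
    (hr : 1 < r) (hh : DifferentiableOn ℂ h (Metric.ball 0 r))
    (hM : ∀ z : ℂ, ‖z‖ = 1 → ‖h z‖ ≤ M) (hhv : MemLp (fun x => h (v x)) ∞ μ) (φ : Lp ℂ 2 μ) :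
    ‖S (mulOp hhv φ)‖ ≤ M * ‖S φ‖ := by
  have approx_le (ε : ℝ) (hε : 0 < ε) :
      ‖S (mulOp hhv φ)‖ ≤ (M + ε) * ‖S φ‖ + ‖S‖ * (ε * ‖φ‖) := by
    obtain ⟨p, hp⟩ := exists_polynomial_norm_eval_sub_le hr hh hε
    have hpM (z : ℂ) (hz : ‖z‖ = 1) : ‖p.eval z‖ ≤ M + ε := by
      linarith [norm_le_norm_add_norm_sub' (p.eval z) (h z), hM z hz, hp z hz.le]
    have norm_sub_le_mul : ‖mulOp hhv φ - aeval (mulOp hv) p φ‖ ≤ ε * ‖φ‖ := by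
      refine Lp.norm_le_mul_norm_of_ae_le_mul ?_
      filter_upwards [Lp.coeFn_sub (mulOp hhv φ) (aeval (mulOp hv) p φ), coeFn_mulOp hhv φ,
        coeFn_aeval_mulOp hv p φ, hv₁] with x hsub hhx hpx hvx
      rw [hsub, Pi.sub_apply, hhx, hpx, ← sub_mul, norm_mul, norm_sub_rev]
      gcongr
      exact hp _ hvx
    calc ‖S (mulOp hhv φ)‖
        ≤ ‖S (aeval (mulOp hv) p φ)‖ + ‖S (mulOp hhv φ - aeval (mulOp hv) p φ)‖ := by
          rw [map_sub]
          exact norm_le_norm_add_norm_sub' _ _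
      _ ≤ (M + ε) * ‖S φ‖ + ‖S‖ * (ε * ‖φ‖) :=
          add_le_add (norm_aeval_le_of_contraction hS hpM φ) (S.le_opNorm_of_le norm_sub_le_mul)
  have continuous_bound : Continuous fun ε : ℝ => (M + ε) * ‖S φ‖ + ‖S‖ * (ε * ‖φ‖) := by
    fun_prop
  have tendsto_bound := continuous_bound.continuousWithinAt (s := Ioi 0) (x := 0) |>.tendsto
  rw [add_zero, zero_mul, mul_zero, add_zero] at tendsto_bound
  exact ge_of_tendsto tendsto_bound (eventually_of_mem self_mem_nhdsWithin approx_le)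

end Holomorphic

section BoundaryValues

/-- The affine map `z ↦ (i / s) (1 + s² - z)`. For `s > 0` it maps a neighbourhood of the closed
unit disc into the open upper half-plane, and it sends `exp (i s y)` to approximately `y`. -/
def discToHalfPlane (s : ℝ) (z : ℂ) : ℂ :=
  I / s * (1 + s ^ 2 - z)

theorem discToHalfPlane_im_pos {s : ℝ} (hs : 0 < s) {z : ℂ} (hz : ‖z‖ < 1 + s ^ 2) :
    0 < (discToHalfPlane s z).im := by
  have im_eq : (discToHalfPlane s z).im = (1 + s ^ 2 - z.re) / s := by
    simp [discToHalfPlane, div_mul_eq_mul_div, div_ofReal_im, ← ofReal_pow]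
  rw [im_eq]
  exact div_pos (by linarith [z.re_le_norm]) hs

theorem discToHalfPlane_cexp_im_pos {s : ℝ} (hs : 0 < s) (y : ℝ) :
    0 < (discToHalfPlane s (cexp (s * y * I))).im := by
  refine discToHalfPlane_im_pos hs ?_
  rw [← ofReal_mul, norm_exp_ofReal_mul_I]
  exact lt_add_of_pos_right 1 (by positivity)

theorem tendsto_discToHalfPlane_cexp (y : ℝ) :
    Tendsto (fun s : ℝ => discToHalfPlane s (cexp (s * y * I))) (𝓝[>] 0) (𝓝 y) := by
  have hderiv : HasDerivAt (fun s : ℝ => cexp (s * y * I)) (y * I) 0 := by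
    simpa [mul_assoc] using
      (((hasDerivAt_id (0 : ℝ)).ofReal_comp.mul_const (y : ℂ)).mul_const I).cexp
  have hslope := hderiv.tendsto_slope.mono_left
    (nhdsWithin_mono 0 fun s (hs : 0 < s) => hs.ne')
  have hid : Tendsto (fun s : ℝ => (s : ℂ)) (𝓝[>] 0) (𝓝 0) :=
    (continuous_ofReal.tendsto' 0 0 ofReal_zero).mono_left nhdsWithin_le_nhds
  have hlim := (hid.sub hslope).const_mul I
  rw [zero_sub, mul_neg, mul_left_comm, I_mul_I, mul_neg_one, neg_neg] at hlim
  refine hlim.congr' (eventually_of_mem self_mem_nhdsWithin fun s (hs : 0 < s) => ?_)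
  have : (s : ℂ) ≠ 0 := ofReal_ne_zero.2 hs.ne'
  simp only [slope_def_module, sub_zero, ofReal_zero, zero_mul, exp_zero, real_smul, ofReal_inv,
    discToHalfPlane]
  field_simp
  ring

variable {α : Type*} [MeasurableSpace α] {μ : Measure α} {ℓ : α → ℝ}
  {H : Type*} [NormedAddCommGroup H] [InnerProductSpace ℂ H] [CompleteSpace H]

theorem memLp_top_cexp_mul_I (hℓ : AEStronglyMeasurable ℓ μ) (s : ℝ) :
    MemLp (fun x => cexp (s * ℓ x * I)) ∞ μ := by
  refine memLp_top_of_bound (Continuous.comp_aestronglyMeasurable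
    (g := fun y : ℝ => cexp (s * y * I)) (by fun_prop) hℓ) 1 (ae_of_all _ fun x => ?_)
  rw [← ofReal_mul, norm_exp_ofReal_mul_I]

theorem memLp_top_comp_discToHalfPlane (hℓ : AEStronglyMeasurable ℓ μ) {s : ℝ} (hs : 0 < s)
    {F : ℂ → ℂ} {M : ℝ} (hF : ContinuousOn F {w | 0 < w.im})
    (hM : ∀ w : ℂ, 0 < w.im → ‖F w‖ ≤ M) :
    MemLp (fun x => F (discToHalfPlane s (cexp (s * ℓ x * I)))) ∞ μ := by
  have continuous_comp : Continuous fun y : ℝ => F (discToHalfPlane s (cexp (s * y * I))) := by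
    refine hF.comp_continuous ?_ (discToHalfPlane_cexp_im_pos hs)
    unfold discToHalfPlane
    fun_prop
  exact memLp_top_of_bound (continuous_comp.comp_aestronglyMeasurable hℓ) M
    (ae_of_all _ fun x => hM _ (discToHalfPlane_cexp_im_pos hs _))

theorem norm_mulOp_discToHalfPlane_le {S : Lp ℂ 2 μ →L[ℂ] H} {s : ℝ} (hs : 0 < s)
    (hℓ : AEStronglyMeasurable ℓ μ)
    (hS : ∀ φ, ‖S (mulOp (memLp_top_cexp_mul_I hℓ s) φ)‖ ≤ ‖S φ‖) {F : ℂ → ℂ} {M : ℝ}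
    (hF : DifferentiableOn ℂ F {w | 0 < w.im}) (hM : ∀ w : ℂ, 0 < w.im → ‖F w‖ ≤ M)
    (hg : MemLp (fun x => F (discToHalfPlane s (cexp (s * ℓ x * I)))) ∞ μ) (φ : Lp ℂ 2 μ) :
    ‖S (mulOp hg φ)‖ ≤ M * ‖S φ‖ := by
  have one_lt : 1 < 1 + s ^ 2 := lt_add_of_pos_right 1 (by positivity)
  have differentiable_discToHalfPlane : Differentiable ℂ (discToHalfPlane s) := by
    unfold discToHalfPlane
    fun_prop
  refine norm_mulOp_comp_le (h := F ∘ discToHalfPlane s) (memLp_top_cexp_mul_I hℓ s)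
    (ae_of_all _ fun x => ?_) hS one_lt ?_ (fun z hz => ?_) hg φ
  · rw [← ofReal_mul, norm_exp_ofReal_mul_I]
  · exact hF.comp differentiable_discToHalfPlane.differentiableOn fun z hz =>
      discToHalfPlane_im_pos hs (mem_ball_zero_iff.1 hz)
  · exact hM _ (discToHalfPlane_im_pos hs (hz.trans_lt one_lt))

theorem norm_mulOp_boundary_value_le {S : Lp ℂ 2 μ →L[ℂ] H} (hℓ : AEStronglyMeasurable ℓ μ)
    (hS : ∀ s > 0, ∀ φ, ‖S (mulOp (memLp_top_cexp_mul_I hℓ s) φ)‖ ≤ ‖S φ‖) {F : ℂ → ℂ} {M : ℝ}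
    (hF : DifferentiableOn ℂ F {w | 0 < w.im}) (hM : ∀ w : ℂ, 0 < w.im → ‖F w‖ ≤ M)
    {g : α → ℂ} (hg : MemLp g ∞ μ)
    (hgF : ∀ᵐ x ∂μ, Tendsto F (𝓝[{w | 0 < w.im}] (ℓ x)) (𝓝 (g x))) (φ : Lp ℂ 2 μ) :
    ‖S (mulOp hg φ)‖ ≤ M * ‖S φ‖ := by
  obtain ⟨s, -, hs, hs₀⟩ := exists_seq_strictAnti_tendsto (0 : ℝ)
  have hs' : Tendsto s atTop (𝓝[>] 0) :=
    tendsto_nhdsWithin_iff.2 ⟨hs₀, Eventually.of_forall hs⟩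
  have hmem (n : ℕ) := memLp_top_comp_discToHalfPlane hℓ (hs n) hF.continuousOn hM
  have hlim := tendsto_mulOp_apply hmem hg
    (fun n => ae_of_all _ fun x => hM _ (discToHalfPlane_cexp_im_pos (hs n) _))
    (hgF.mono fun x hx => hx.comp (tendsto_nhdsWithin_iff.2
      ⟨(tendsto_discToHalfPlane_cexp (ℓ x)).comp hs',
        Eventually.of_forall fun n => discToHalfPlane_cexp_im_pos (hs n) _⟩)) φ
  exact le_of_tendsto' ((S.continuous.tendsto _).comp hlim).norm fun n =>
    norm_mulOp_discToHalfPlane_le (hs n) hℓ (hS _ (hs n)) hF hM (hmem n) φ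

end BoundaryValues

section SquareRoot

theorem sqrt_im_pos {w : ℂ} (hw : 0 < w.im) : 0 < w.sqrt.im := by
  rw [Complex.sqrt, cpow_inv_two_im_eq_sqrt hw.le]
  have : w.re < ‖w‖ := (le_abs_self _).trans_lt (abs_re_lt_norm.2 hw.ne')
  exact Real.sqrt_pos.2 (by linarith)

theorem differentiableOn_comp_sqrt {G : ℂ → ℂ} (hG : DifferentiableOn ℂ G {w | 0 < w.im}) :
    DifferentiableOn ℂ (G ∘ Complex.sqrt) {w | 0 < w.im} := by
  refine hG.comp (fun w (hw : 0 < w.im) => ?_) fun w => sqrt_im_pos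
  exact (differentiableAt_id.cpow_const (.inr hw.ne')).differentiableWithinAt

theorem tendsto_comp_sqrt {G : ℂ → ℂ} (hG : ContinuousOn G {w | 0 ≤ w.im}) (k : ℝ) :
    Tendsto (G ∘ Complex.sqrt) (𝓝[{w | 0 < w.im}] ((k ^ 2 : ℝ) : ℂ)) (𝓝 (G (|k| : ℝ))) := by
  have sqrt_sq : Complex.sqrt ((k ^ 2 : ℝ) : ℂ) = (|k| : ℝ) := by
    rw [Complex.sqrt_of_nonneg (by exact_mod_cast sq_nonneg k), ofReal_re, Real.sqrt_sq_eq_abs]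
  have continuousAt_sqrt : ContinuousAt Complex.sqrt ((k ^ 2 : ℝ) : ℂ) :=
    continuousAt_cpow_const_of_re_pos (.inl (sq_nonneg k)) (by norm_num)
  refine (hG _ (by simp)).tendsto.comp (tendsto_nhdsWithin_iff.2
    ⟨sqrt_sq ▸ continuousAt_sqrt.continuousWithinAt.tendsto, ?_⟩)
  exact eventually_of_mem self_mem_nhdsWithin fun w hw => (sqrt_im_pos hw).le

theorem memLp_top_comp_abs {μ : Measure ℝ} {G : ℂ → ℂ} {M : ℝ} (hG : ContinuousOn G {w | 0 ≤ w.im})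
    (hM : ∀ w : ℂ, 0 ≤ w.im → ‖G w‖ ≤ M) :
    MemLp (fun k : ℝ => G (|k| : ℝ)) ∞ μ :=
  memLp_top_of_bound (hG.comp_continuous (by fun_prop) (by simp)).aestronglyMeasurable M
    (ae_of_all _ fun k => hM _ (ofReal_im _).ge)

end SquareRoot

namespace POM

variable {K : Type} [NormedAddCommGroup K] [InnerProductSpace ℂ K] [CompleteSpace K]

open Classical in
/-- The `K`-valued measure `B ↦ E(B) φ` of a vector `φ`; being a `VectorMeasure` it is set to `0`
on sets that are not Borel. -/
def vectorMeasure (E : POM K) (φ : K) : VectorMeasure ℝ K where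
  measureOf' B := if MeasurableSet B then E.toFun B φ else 0
  empty' := by simp [E.empty]
  not_measurable' _ hB := if_neg hB
  m_iUnion' f hf hdisj := by
    simpa [hf, MeasurableSet.iUnion hf] using E.sigma_additive f hf hdisj φ

theorem vectorMeasure_apply (E : POM K) (φ : K) {B : Set ℝ} (hB : MeasurableSet B) :
    E.vectorMeasure φ B = E.toFun B φ :=
  if_pos hB

theorem re_inner_mono (E : POM K) {A B : Set ℝ} (hA : MeasurableSet A) (hB : MeasurableSet B)
    (hAB : A ⊆ B) (φ : K) :
    (inner ℂ φ (E.toFun A φ)).re ≤ (inner ℂ φ (E.toFun B φ)).re := by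
  have additive := (E.vectorMeasure φ).of_add_of_sdiff hA hB hAB
  rw [vectorMeasure_apply E φ hA, vectorMeasure_apply E φ hB,
    vectorMeasure_apply E φ (hB.diff hA)] at additive
  rw [← additive, inner_add_right, add_re]
  exact le_add_of_nonneg_right ((E.pos (B \ A)).re_inner_nonneg_right φ)

end POM

section CovariantPOM

variable {K : Type} [NormedAddCommGroup K] [InnerProductSpace ℂ K] {μ : Measure ℝ}

/-- The unitary group `t ↦ U* e^{-itM²} U`, where `U` is any unitary onto `L²(μ)`; `freeEvol` is
the case `K = L²(ℝ)`, `U = 𝓕`. -/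
def quadraticEvolution (U : K ≃ₗᵢ[ℂ] Lp ℂ 2 μ) (t : ℝ) (φ : K) : K :=
  U.symm (mulLp (fun k : ℝ => cexp (-(I * t * k ^ 2))) (U φ))

variable {U : K ≃ₗᵢ[ℂ] Lp ℂ 2 μ}

theorem aestronglyMeasurable_sq : AEStronglyMeasurable (fun k : ℝ => k ^ 2) μ :=
  (continuous_pow 2).aestronglyMeasurable

theorem quadraticEvolution_eq_mulOp (t : ℝ) (φ : K) :
    quadraticEvolution U t φ =
      U.symm (mulOp (memLp_top_cexp_mul_I (μ := μ) aestronglyMeasurable_sq (-t)) (U φ)) := by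
  rw [quadraticEvolution, ← mulLp_eq_mulOp]
  congr 2
  ext k
  push_cast
  ring_nf

theorem inner_quadraticEvolution_left (t : ℝ) (φ ψ : K) :
    inner ℂ (quadraticEvolution U t φ) ψ = inner ℂ φ (quadraticEvolution U (-t) ψ) := by
  have star_cexp : star (fun k : ℝ => cexp ((-t : ℝ) * (k ^ 2 : ℝ) * I)) =
      fun k : ℝ => cexp ((- -t : ℝ) * (k ^ 2 : ℝ) * I) := by
    ext k
    simp [← exp_conj]
  rw [quadraticEvolution_eq_mulOp, quadraticEvolution_eq_mulOp, U.symm.inner_map_eq_flip,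
    inner_mulOp_left, ← U.inner_map_eq_flip]
  simp only [star_cexp, LinearIsometryEquiv.symm_symm]

variable [CompleteSpace K] {E : POM K}

theorem re_inner_quadraticEvolution_neg_le
    (hcov : ∀ (t : ℝ) (B : Set ℝ), MeasurableSet B → ∀ φ : K,
      quadraticEvolution U (-t) (E.toFun B (quadraticEvolution U t φ)) =
        E.toFun ((· + t) '' B) φ) (t : ℝ) {s : ℝ} (hs : 0 < s) (φ : K) :
    (inner ℂ (quadraticEvolution U (-s) φ)
      (E.toFun (Iic t) (quadraticEvolution U (-s) φ))).re ≤ (inner ℂ φ (E.toFun (Iic t) φ)).re := by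
  rw [inner_quadraticEvolution_left, hcov (-s) (Iic t) measurableSet_Iic, image_add_const_Iic]
  exact E.re_inner_mono measurableSet_Iic measurableSet_Iic (Iic_subset_Iic.2 (by linarith)) φ

theorem re_inner_eq_zero_of_ae_eq_zero
    (htotal : ∀ φ : K,
      E.toFun univ φ = U.symm (mulLp (indicator (Ici (0 : ℝ)) fun _ => (1 : ℂ)) (U φ)))
    {B : Set ℝ} (hB : MeasurableSet B) {φ : K} (hφ : ∀ᵐ k ∂μ, 0 ≤ k → U φ k = 0) :
    (inner ℂ φ (E.toFun B φ)).re = 0 := by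
  have hind : MemLp (indicator (Ici (0 : ℝ)) fun _ => (1 : ℂ)) ∞ μ :=
    (memLp_top_const 1).indicator measurableSet_Ici
  have total_apply : E.toFun univ φ = 0 := by
    rw [htotal, mulLp_eq_mulOp hind, LinearIsometryEquiv.map_eq_zero_iff, Lp.eq_zero_iff_ae_eq_zero]
    filter_upwards [coeFn_mulOp hind (U φ), hφ] with k hk hφk
    by_cases hk₀ : 0 ≤ k
    · simp [hk, hφk hk₀]
    · simp [hk, hk₀]
  refine le_antisymm ?_ ((E.pos B).re_inner_nonneg_right φ)
  simpa [total_apply] using E.re_inner_mono hB .univ (subset_univ B) φ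

theorem statement7_general
    (hcov : ∀ (t : ℝ) (B : Set ℝ), MeasurableSet B → ∀ φ : K,
      quadraticEvolution U (-t) (E.toFun B (quadraticEvolution U t φ)) =
        E.toFun ((· + t) '' B) φ)
    (htotal : ∀ φ : K,
      E.toFun univ φ = U.symm (mulLp (indicator (Ici (0 : ℝ)) fun _ => (1 : ℂ)) (U φ)))
    {T : ℝ → ℂ} {Tt : ℂ → ℂ} (hTc : ContinuousOn Tt {ω : ℂ | 0 ≤ ω.im})
    (hTa : DifferentiableOn ℂ Tt {ω : ℂ | 0 < ω.im})
    (hTb : ∀ ω : ℂ, 0 ≤ ω.im → ‖Tt ω‖ ≤ 1) (hagree : ∀ k : ℝ, 0 ≤ k → Tt (k : ℂ) = T k)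
    (t : ℝ) {φ : K} (hTφ : MemLp (fun k => T k * U φ k) 2 μ) :
    (inner ℂ (U.symm (mulLp T (U φ))) (E.toFun (Iic t) (U.symm (mulLp T (U φ))))).re ≤
      (inner ℂ φ (E.toFun (Iic t) φ)).re := by
  obtain ⟨S, hS⟩ := exists_norm_sq_eq_re_inner (E.pos (Iic t))
  have hG := memLp_top_comp_abs (μ := μ) hTc hTb
  have S_evolution_le (s : ℝ) (hs : s > 0) (f : Lp ℂ 2 μ) :
      ‖S (U.symm (mulOp (memLp_top_cexp_mul_I aestronglyMeasurable_sq s) f))‖ ≤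
        ‖S (U.symm f)‖ := by
    refine le_of_sq_le_sq ?_ (norm_nonneg _)
    simpa [hS, quadraticEvolution_eq_mulOp] using
      re_inner_quadraticEvolution_neg_le hcov t hs (U.symm f)
  have S_boundary_le : ‖S (U.symm (mulOp hG (U φ)))‖ ≤ ‖S φ‖ := by
    simpa using norm_mulOp_boundary_value_le (S := S ∘L (U.symm : Lp ℂ 2 μ →L[ℂ] K))
      aestronglyMeasurable_sq S_evolution_le (differentiableOn_comp_sqrt hTa)
      (fun w hw => hTb _ (sqrt_im_pos hw).le) hG (ae_of_all _ (tendsto_comp_sqrt hTc)) (U φ)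
  have S_eq : S (U.symm (mulLp T (U φ))) = S (U.symm (mulOp hG (U φ))) := by
    rw [← sub_eq_zero, ← map_sub, ← map_sub, ← norm_eq_zero, ← sq_eq_zero_iff, hS]
    refine re_inner_eq_zero_of_ae_eq_zero htotal measurableSet_Iic ?_
    rw [U.apply_symm_apply, mulLp, dif_pos hTφ]
    filter_upwards [Lp.coeFn_sub (hTφ.toLp _) (mulOp hG (U φ)), hTφ.coeFn_toLp,
      coeFn_mulOp hG (U φ)] with k hsub hTk hGk hk
    rw [hsub, Pi.sub_apply, hTk, hGk, abs_of_nonneg hk, hagree k hk, sub_self]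
  rw [← hS, ← hS, S_eq]
  gcongr

end CovariantPOM

/-- Let `E₀` be a POM on `L²(ℝ)` which is time-covariant for the free
evolution, `e^{itH₀} E₀(B) e^{-itH₀} = E₀(B+t)`, and satisfies `E₀(ℝ) = F* χ_{[0,∞)}(M) F`.
If `T : ℝ → ℂ` is measurable and has a continuous extension `T̃` to the closed upper
half-plane, analytic on the open half-plane, with `|T̃| ≤ 1` and `T̃(k) = T(k)` for `k ≥ 0`,
then `T(P)* E₀((-∞,t]) T(P) ≤ E₀((-∞,t])` for every `t ∈ ℝ`. -/
theorem statement7 (𝓕 : H2 ≃ₗᵢ[ℂ] H2) (h𝓕 : IsFourier 𝓕) (E₀ : POM H2)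
    (hcov : ∀ (t : ℝ) (B : Set ℝ), MeasurableSet B → ∀ φ : H2,
      freeEvol 𝓕 (-t) (E₀.toFun B (freeEvol 𝓕 t φ)) = E₀.toFun ((· + t) '' B) φ)
    (htotal : ∀ φ : H2,
      E₀.toFun Set.univ φ =
        𝓕.symm (mulLp (Set.indicator (Set.Ici (0 : ℝ)) fun _ => (1 : ℂ)) (𝓕 φ)))
    (T : ℝ → ℂ) (hT : Measurable T) (Tt : ℂ → ℂ)
    (hTc : ContinuousOn Tt {ω : ℂ | 0 ≤ ω.im})
    (hTa : DifferentiableOn ℂ Tt {ω : ℂ | 0 < ω.im})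
    (hTb : ∀ ω : ℂ, 0 ≤ ω.im → ‖Tt ω‖ ≤ 1)
    (hagree : ∀ k : ℝ, 0 ≤ k → Tt (k : ℂ) = T k)
    (t : ℝ) (φ : H2) :
    (inner ℂ (𝓕.symm (mulLp T (𝓕 φ)))
        (E₀.toFun (Set.Iic t) (𝓕.symm (mulLp T (𝓕 φ)))) : ℂ).re ≤
      (inner ℂ φ (E₀.toFun (Set.Iic t) φ) : ℂ).re := by
  by_cases hTφ : MemLp (fun k => T k * 𝓕 φ k) 2 volume
  · exact statement7_general (U := 𝓕) hcov htotal hTc hTa hTb hagree t hTφ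
  · simpa [mulLp, hTφ] using (E₀.pos (Iic t)).re_inner_nonneg_right φ
end
end

section
/- Let g : ℝ → ℂ be measurable and admit an extension g̃ : {ω ∈ ℂ : Im ω ≥ 0} → ℂ analytic on {Im ω > 0}, with |g̃(ω)| ≤ 1 everywhere and lim_{b→0+} g̃(k+ib) = g(k) for almost all k ∈ ℝ. Then for every a ∈ ℝ and every ψ ∈ L²(ℝ), ∫_{[a,∞)} |(F*(g·(Fψ)))(x)|² dx ≤ ∫_{[a,∞)} |ψ(x)|² dx; equivalently, g(P)* χ_{[a,∞)}(Q) g(P) ≤ χ_{[a,∞)}(Q), where g(P) := F* g(M) F and χ_{[a,∞)}(Q) is multiplication by the characteristic function of [a,∞). -/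
open MeasureTheory Complex Filter Set
open scoped ENNReal NNReal

noncomputable section

/-- `gt` is an extension of `g : ℝ → ℂ` to the closed upper half-plane which is analytic on the
open upper half-plane, bounded by one there, and has non-tangential boundary values `g` a.e. -/
structure HardyExt (g : ℝ → ℂ) (gt : ℂ → ℂ) : Prop where
  agree : ∀ a : ℝ, gt (a : ℂ) = g a
  analytic : DifferentiableOn ℂ gt {ω : ℂ | 0 < ω.im}
  bounded : ∀ ω : ℂ, 0 ≤ ω.im → ‖gt ω‖ ≤ 1
  boundary : ∀ᵐ a : ℝ ∂volume,
    Tendsto (fun b : ℝ => gt ((a : ℂ) + b * Complex.I)) (nhdsWithin 0 (Ioi 0)) (nhds (g a))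

/-!
`g(P)` is a contraction, so it suffices that it maps functions vanishing on `[a, ∞)` to functions
vanishing on `[a, ∞)`: then only the part of `ψ` on `[a, ∞)` contributes to `g(P)ψ` there. Taking
adjoints, this invariance reduces to `⟪1_J, g(P) 1_I⟫ = 0` for bounded intervals `I` to the left of
`J`. By Plancherel that matrix element is the integral over `ℝ` of `g` times two exponential
kernels. The integrand extends analytically to the upper half-plane, where it is `O(|ω|⁻²)` because
the exponential growth of one kernel is compensated by the decay of the other; hence Cauchy's
theorem makes its integral over `ℝ + ib` vanish, and `b → 0+` gives the claim.
-/

open scoped Topology ComplexConjugate Interval InnerProductSpace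

section ContourIntegrals

variable {E : Type*} [NormedAddCommGroup E] {f : ℂ → E} {b C M T : ℝ}

lemma nonneg_of_norm_le_mul_inv_one_add_sq
    (hC : ∀ ω : ℂ, 0 < ω.im → ‖f ω‖ ≤ C * (1 + ‖ω‖ ^ 2)⁻¹) : 0 ≤ C :=
  nonneg_of_mul_nonneg_left ((norm_nonneg _).trans (hC I (by simp))) (by positivity)

lemma norm_horizontal_line_le (hC : ∀ ω : ℂ, 0 < ω.im → ‖f ω‖ ≤ C * (1 + ‖ω‖ ^ 2)⁻¹)
    (hb : 0 < b) (k : ℝ) : ‖f (k + b * I)‖ ≤ C * (1 + k ^ 2)⁻¹ := by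
  have hC₀ : 0 ≤ C := nonneg_of_norm_le_mul_inv_one_add_sq hC
  refine (hC _ (by simpa using hb)).trans ?_
  rw [← sq_abs k]
  gcongr
  simpa using abs_re_le_norm (k + b * I)

variable [NormedSpace ℂ E]

lemma integral_horizontal_segment_eq [CompleteSpace E]
    (hf : DifferentiableOn ℂ f {ω : ℂ | 0 < ω.im}) (hb : 0 < b) (hT : 0 ≤ T) :
    ∫ x : ℝ in -T..T, f (x + b * I) =
      (∫ x : ℝ in -T..T, f (x + (b + T : ℝ) * I))
        - I • (∫ y : ℝ in b..b + T, f (T + y * I))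
        + I • (∫ y : ℝ in b..b + T, f ((-T : ℝ) + y * I)) := by
  have rect_subset : [[-T, T]] ×ℂ [[b, b + T]] ⊆ {ω : ℂ | 0 < ω.im} := by
    intro ω hω
    rw [mem_reProdIm, uIcc_of_le (show b ≤ b + T by linarith)] at hω
    exact hb.trans_le hω.2.1
  rw [← sub_eq_zero, ← integral_boundary_rect_eq_zero_of_differentiableOn f ⟨-T, b⟩ ⟨T, b + T⟩
    (hf.mono rect_subset)]
  abel

lemma norm_integral_horizontal_segment_le [CompleteSpace E]
    (hf : DifferentiableOn ℂ f {ω : ℂ | 0 < ω.im}) (hb : 0 < b) (hT : 0 ≤ T)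
    (hM : ∀ ω : ℂ, 0 < ω.im → T ≤ ‖ω‖ → ‖f ω‖ ≤ M) :
    ‖∫ x : ℝ in -T..T, f (x + b * I)‖ ≤ 4 * M * T := by
  have top_le : ‖∫ x : ℝ in -T..T, f (x + (b + T : ℝ) * I)‖ ≤ M * |T - -T| := by
    refine intervalIntegral.norm_integral_le_of_norm_le_const fun x _ => hM _ ?_ ?_
    · simpa using (by linarith : 0 < b + T)
    · calc T ≤ |b + T| := (by linarith : T ≤ b + T).trans (le_abs_self _)
        _ ≤ ‖x + (b + T : ℝ) * I‖ := by simpa using abs_im_le_norm (x + (b + T : ℝ) * I)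
  have side_le (s : ℝ) (hs : |s| = T) :
      ‖I • ∫ y : ℝ in b..b + T, f (s + y * I)‖ ≤ M * |b + T - b| := by
    rw [norm_smul, norm_I, one_mul]
    refine intervalIntegral.norm_integral_le_of_norm_le_const fun y hy => hM _ ?_ ?_
    · rw [uIoc_of_le (by linarith)] at hy
      simpa using hb.trans hy.1
    · simpa [hs] using abs_re_le_norm (s + y * I)
  calc ‖∫ x : ℝ in -T..T, f (x + b * I)‖ ≤ M * |T - -T| + M * |b + T - b| + M * |b + T - b| := by
        rw [integral_horizontal_segment_eq hf hb hT]
        exact norm_add_le_of_le (norm_sub_le_of_le top_le (side_le T (abs_of_nonneg hT)))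
          (side_le (-T) (by rw [abs_neg, abs_of_nonneg hT]))
    _ = 4 * M * T := by
        rw [sub_neg_eq_add, add_sub_cancel_left, abs_of_nonneg hT, abs_of_nonneg (by positivity)]
        ring

lemma continuous_horizontal_line (hf : DifferentiableOn ℂ f {ω : ℂ | 0 < ω.im}) (hb : 0 < b) :
    Continuous fun k : ℝ => f (k + b * I) :=
  hf.continuousOn.comp_continuous (by fun_prop) fun k => by simpa using hb

theorem integral_horizontal_line_eq_zero [CompleteSpace E]
    (hf : DifferentiableOn ℂ f {ω : ℂ | 0 < ω.im})
    (hC : ∀ ω : ℂ, 0 < ω.im → ‖f ω‖ ≤ C * (1 + ‖ω‖ ^ 2)⁻¹) (hb : 0 < b) :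
    ∫ k : ℝ, f (k + b * I) = 0 := by
  have hC₀ : 0 ≤ C := nonneg_of_norm_le_mul_inv_one_add_sq hC
  have integrable : Integrable fun k : ℝ => f (k + b * I) :=
    (integrable_inv_one_add_sq.const_mul C).mono'
      (continuous_horizontal_line hf hb).aestronglyMeasurable
      (.of_forall (norm_horizontal_line_le hC hb))
  refine tendsto_nhds_unique
    (intervalIntegral_tendsto_integral integrable tendsto_neg_atTop_atBot tendsto_id) ?_
  have bound_tendsto : Tendsto (fun T : ℝ => 4 * C * T⁻¹) atTop (𝓝 0) := by
    simpa using tendsto_inv_atTop_zero.const_mul (4 * C)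
  refine squeeze_zero_norm' ?_ bound_tendsto
  filter_upwards [eventually_gt_atTop 0] with T hT
  calc ‖∫ x : ℝ in -T..T, f (x + b * I)‖ ≤ 4 * (C * (T ^ 2)⁻¹) * T := by
        refine norm_integral_horizontal_segment_le hf hb hT.le fun ω hω hTω => ?_
        refine (hC ω hω).trans ?_
        gcongr
        nlinarith
    _ = 4 * C * T⁻¹ := by field_simp

theorem integral_boundary_value_eq_zero [CompleteSpace E] {f₀ : ℝ → E}
    (hf : DifferentiableOn ℂ f {ω : ℂ | 0 < ω.im})
    (hC : ∀ ω : ℂ, 0 < ω.im → ‖f ω‖ ≤ C * (1 + ‖ω‖ ^ 2)⁻¹)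
    (hf₀ : ∀ᵐ k : ℝ, Tendsto (fun b : ℝ => f (k + b * I)) (𝓝[>] 0) (𝓝 (f₀ k))) :
    ∫ k, f₀ k = 0 := by
  have tendsto_integral : Tendsto (fun b : ℝ => ∫ k : ℝ, f (k + b * I)) (𝓝[>] 0)
      (𝓝 (∫ k, f₀ k)) := by
    refine tendsto_integral_filter_of_dominated_convergence _ ?_ ?_
      (integrable_inv_one_add_sq.const_mul C) hf₀
    · filter_upwards [self_mem_nhdsWithin] with b hb
      exact (continuous_horizontal_line hf hb).aestronglyMeasurable
    · filter_upwards [self_mem_nhdsWithin] with b hb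
      exact .of_forall (norm_horizontal_line_le hC hb)
  refine tendsto_nhds_unique (tendsto_integral.congr' ?_) tendsto_const_nhds
  filter_upwards [self_mem_nhdsWithin] with b hb using integral_horizontal_line_eq_zero hf hC hb

end ContourIntegrals

section ExponentialKernel

/-- The entire function `ω ↦ ∫ₚ^q e^{iωt} dt`: up to the factor `√(2π)`, the inverse Fourier
transform of the indicator function of `(p, q]`, extended to complex frequencies. -/
def expKernel (p q : ℝ) (ω : ℂ) : ℂ := ∫ t : ℝ in p..q, exp (I * ω * t)

variable {p q : ℝ} {ω : ℂ}

lemma expKernel_eq_div (p q : ℝ) (hω : ω ≠ 0) :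
    expKernel p q ω = (exp (I * ω * q) - exp (I * ω * p)) / (I * ω) :=
  integral_exp_mul_complex (mul_ne_zero I_ne_zero hω)

lemma continuous_expKernel (p q : ℝ) : Continuous (expKernel p q) :=
  intervalIntegral.continuous_parametric_intervalIntegral_of_continuous' (by fun_prop) _ _

lemma differentiable_expKernel (p q : ℝ) : Differentiable ℂ (expKernel p q) := by
  rw [← differentiableOn_univ,
    ← differentiableOn_compl_singleton_and_continuousAt_iff (c := 0) univ_mem]
  refine ⟨?_, (continuous_expKernel p q).continuousAt⟩
  have h : DifferentiableOn ℂ (fun ω : ℂ => (exp (I * ω * q) - exp (I * ω * p)) / (I * ω))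
      (univ \ {0}) :=
    .div (by fun_prop) (by fun_prop) fun ω hω => mul_ne_zero I_ne_zero hω.2
  exact h.congr fun ω hω => expKernel_eq_div p q hω.2

lemma conj_expKernel (p q : ℝ) (ω : ℂ) :
    conj (expKernel p q ω) = expKernel (-q) (-p) (conj ω) := by
  simp only [expKernel, ← intervalIntegral.intervalIntegral_conj, ← exp_conj]
  rw [← intervalIntegral.integral_comp_neg]
  simp

lemma norm_exp_I_mul_le {t : ℝ} (hpt : p ≤ t) (hω : 0 ≤ ω.im) :
    ‖exp (I * ω * t)‖ ≤ Real.exp (-(p * ω.im)) := by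
  rw [norm_exp]
  gcongr
  simpa [mul_comm] using mul_le_mul_of_nonneg_left hpt hω

lemma norm_expKernel_le (hpq : p ≤ q) (hω : 0 ≤ ω.im) :
    ‖expKernel p q ω‖ ≤ (q - p) * Real.exp (-(p * ω.im)) := by
  rw [mul_comm, ← abs_of_nonneg (sub_nonneg.2 hpq)]
  refine intervalIntegral.norm_integral_le_of_norm_le_const fun t ht => ?_
  rw [uIoc_of_le hpq] at ht
  exact norm_exp_I_mul_le ht.1.le hω

lemma norm_expKernel_mul_norm_le (hpq : p ≤ q) (hω : 0 ≤ ω.im) :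
    ‖expKernel p q ω‖ * ‖ω‖ ≤ 2 * Real.exp (-(p * ω.im)) := by
  rcases eq_or_ne ω 0 with rfl | hω₀
  · simp
  rw [expKernel_eq_div p q hω₀, norm_div, norm_mul, norm_I, one_mul,
    div_mul_cancel₀ _ (norm_ne_zero_iff.2 hω₀), two_mul]
  exact norm_sub_le_of_le (norm_exp_I_mul_le hpq hω) (norm_exp_I_mul_le le_rfl hω)

lemma norm_expKernel_mul_one_add_norm_le (hpq : p ≤ q) (hω : 0 ≤ ω.im) :
    ‖expKernel p q ω‖ * (1 + ‖ω‖) ≤ (q - p + 2) * Real.exp (-(p * ω.im)) := by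
  linarith [norm_expKernel_le hpq hω, norm_expKernel_mul_norm_le hpq hω]

lemma norm_expKernel_mul_expKernel_le {p' q' : ℝ} (hpq : p ≤ q) (hpq' : p' ≤ q')
    (hpp' : 0 ≤ p + p') (hω : 0 ≤ ω.im) :
    ‖expKernel p q ω * expKernel p' q' ω‖ ≤
      (q - p + 2) * (q' - p' + 2) * (1 + ‖ω‖ ^ 2)⁻¹ := by
  rw [← div_eq_mul_inv, le_div_iff₀ (by positivity), norm_mul]
  have growth_le_one : Real.exp (-(p * ω.im)) * Real.exp (-(p' * ω.im)) ≤ 1 := by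
    rw [← Real.exp_add, Real.exp_le_one_iff]
    linarith [mul_nonneg hpp' hω]
  calc ‖expKernel p q ω‖ * ‖expKernel p' q' ω‖ * (1 + ‖ω‖ ^ 2)
      ≤ ‖expKernel p q ω‖ * ‖expKernel p' q' ω‖ * (1 + ‖ω‖) ^ 2 := by
        gcongr
        nlinarith [norm_nonneg ω]
    _ = (‖expKernel p q ω‖ * (1 + ‖ω‖)) * (‖expKernel p' q' ω‖ * (1 + ‖ω‖)) := by ring
    _ ≤ ((q - p + 2) * Real.exp (-(p * ω.im))) * ((q' - p' + 2) * Real.exp (-(p' * ω.im))) :=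
        mul_le_mul (norm_expKernel_mul_one_add_norm_le hpq hω)
          (norm_expKernel_mul_one_add_norm_le hpq' hω) (by positivity)
          (mul_nonneg (by linarith) (Real.exp_nonneg _))
    _ = (q - p + 2) * (q' - p' + 2) * (Real.exp (-(p * ω.im)) * Real.exp (-(p' * ω.im))) := by
        ring
    _ ≤ (q - p + 2) * (q' - p' + 2) :=
        mul_le_of_le_one_right (mul_nonneg (by linarith) (by linarith)) growth_le_one

end ExponentialKernel

namespace HardyExt

variable {g : ℝ → ℂ} {gt : ℂ → ℂ}

lemma norm_le_one (hgt : HardyExt g gt) (k : ℝ) : ‖g k‖ ≤ 1 :=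
  hgt.agree k ▸ hgt.bounded k (by simp)

lemma integral_mul_expKernel_mul_expKernel_eq_zero (hgt : HardyExt g gt) {p q p' q' : ℝ}
    (hpq : p ≤ q) (hpq' : p' ≤ q') (hpp' : 0 ≤ p + p') :
    ∫ k : ℝ, g k * (expKernel p q k * expKernel p' q' k) = 0 := by
  have differentiable_kernels : Differentiable ℂ fun ω => expKernel p q ω * expKernel p' q' ω :=
    (differentiable_expKernel p q).mul (differentiable_expKernel p' q')
  refine integral_boundary_value_eq_zero
    (f := fun ω => gt ω * (expKernel p q ω * expKernel p' q' ω))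
    (C := (q - p + 2) * (q' - p' + 2))
    (hgt.analytic.mul differentiable_kernels.differentiableOn) (fun ω hω => ?_) ?_
  · rw [norm_mul]
    exact (mul_le_of_le_one_left (norm_nonneg _) (hgt.bounded ω hω.le)).trans
      (norm_expKernel_mul_expKernel_le hpq hpq' hpp' hω.le)
  · filter_upwards [hgt.boundary] with k hk
    have vertical_line : Continuous fun b : ℝ => (k + b * I : ℂ) := by fun_prop
    refine hk.mul ?_
    simpa [Function.comp_def] using
      ((differentiable_kernels.continuous.comp vertical_line).tendsto 0).mono_left
      nhdsWithin_le_nhds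

end HardyExt

section LpSpaces

variable {α : Type*} [MeasurableSpace α] {μ : Measure α}

theorem inner_eq_zero_of_ae_restrict_of_ae_restrict_compl {𝕜 E : Type*} [RCLike 𝕜]
    [NormedAddCommGroup E] [InnerProductSpace 𝕜 E] {S : Set α} {φ ψ : Lp E 2 μ}
    (hφ : φ =ᵐ[μ.restrict S] 0) (hψ : ψ =ᵐ[μ.restrict Sᶜ] 0) :
    ⟪φ, ψ⟫_𝕜 = 0 := by
  rw [L2.inner_def]
  refine integral_eq_zero_of_ae (ae_of_ae_restrict_of_ae_restrict_compl S ?_ ?_)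
  · filter_upwards [hφ] with x hx
    simp [hx]
  · filter_upwards [hψ] with x hx
    simp [hx]

theorem eLpNorm_restrict_apply_le_of_preserves_ae_zero {𝕜 E : Type*} [NontriviallyNormedField 𝕜]
    [NormedAddCommGroup E] [NormedSpace 𝕜 E] {p : ℝ≥0∞} [Fact (1 ≤ p)] {S : Set α}
    (hS : MeasurableSet S) {A : Lp E p μ →L[𝕜] Lp E p μ} (hA : ‖A‖ ≤ 1)
    (hAS : ∀ φ : Lp E p μ, φ =ᵐ[μ.restrict S] 0 → A φ =ᵐ[μ.restrict S] 0) (ψ : Lp E p μ) :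
    eLpNorm (A ψ) p (μ.restrict S) ≤ eLpNorm ψ p (μ.restrict S) := by
  have memLp_indicator : MemLp (S.indicator ψ) p μ := (Lp.memLp ψ).indicator hS
  set ψS : Lp E p μ := memLp_indicator.toLp
  have coe_ψS : ψS =ᵐ[μ] S.indicator ψ := memLp_indicator.coeFn_toLp
  have A_eq_on : A ψ =ᵐ[μ.restrict S] A ψS := by
    have sub_zero_on : (ψ - ψS : Lp E p μ) =ᵐ[μ.restrict S] 0 := by
      filter_upwards [ae_restrict_of_ae coe_ψS, ae_restrict_of_ae (Lp.coeFn_sub ψ ψS),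
        ae_restrict_mem hS] with x hx hsub hxS
      rw [hsub, Pi.sub_apply, hx, indicator_of_mem hxS, sub_self, Pi.zero_apply]
    have A_sub_zero_on := hAS _ sub_zero_on
    rw [map_sub] at A_sub_zero_on
    filter_upwards [A_sub_zero_on, ae_restrict_of_ae (Lp.coeFn_sub (A ψ) (A ψS))] with x hx hsub
    rwa [hsub, Pi.sub_apply, Pi.zero_apply, sub_eq_zero] at hx
  calc eLpNorm (A ψ) p (μ.restrict S) = eLpNorm (A ψS) p (μ.restrict S) :=
        eLpNorm_congr_ae A_eq_on
    _ ≤ eLpNorm (A ψS) p μ := eLpNorm_restrict_le _ _ _ _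
    _ ≤ eLpNorm ψS p μ := by
        rw [← Lp.enorm_def, ← Lp.enorm_def, enorm_le_iff_norm_le]
        exact A.le_of_opNorm_le_of_le hA le_rfl |>.trans_eq (one_mul _)
    _ = eLpNorm ψ p (μ.restrict S) := by
        rw [eLpNorm_congr_ae coe_ψS, eLpNorm_indicator_eq_eLpNorm_restrict hS]

theorem integral_norm_sq_le_of_eLpNorm_two_le {E F : Type*} [NormedAddCommGroup E]
    [NormedAddCommGroup F] {u : α → E} {v : α → F} (hu : MemLp u 2 μ) (hv : MemLp v 2 μ)
    (h : eLpNorm u 2 μ ≤ eLpNorm v 2 μ) : ∫ x, ‖u x‖ ^ 2 ∂μ ≤ ∫ x, ‖v x‖ ^ 2 ∂μ := by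
  rw [hu.eLpNorm_eq_integral_rpow_norm two_ne_zero ENNReal.ofNat_ne_top,
    hv.eLpNorm_eq_integral_rpow_norm two_ne_zero ENNReal.ofNat_ne_top,
    ENNReal.ofReal_le_ofReal_iff (by positivity),
    Real.rpow_le_rpow_iff (by positivity) (by positivity) (by norm_num)] at h
  simpa using h

end LpSpaces

theorem ae_restrict_eq_zero_of_intervalIntegral_eq_zero {E : Type*} [NormedAddCommGroup E]
    [NormedSpace ℝ E] [CompleteSpace E] {f : ℝ → E} (hf : LocallyIntegrable f) {U : Set ℝ}
    (hU : IsOpen U) (h : ∀ c d, c ≤ d → Icc c d ⊆ U → ∫ x in c..d, f x = 0) :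
    f =ᵐ[volume.restrict U] 0 := by
  rw [EventuallyEq, ae_restrict_iff' hU.measurableSet]
  filter_upwards [LocallyIntegrable.ae_hasDerivAt_integral hf] with x hderiv hxU
  obtain ⟨ε, hε, hball⟩ := Metric.isOpen_iff.1 hU x hxU
  have primitive_eq_zero : (fun y => ∫ t in x..y, f t) =ᶠ[𝓝 x] fun _ => 0 := by
    filter_upwards [Metric.ball_mem_nhds x hε] with y hy
    have huIcc : [[x, y]] ⊆ U :=
      ((convex_ball x ε).ordConnected.uIcc_subset (Metric.mem_ball_self hε) hy).trans hball
    rcases le_total x y with hxy | hyx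
    · exact h x y hxy (uIcc_of_le hxy ▸ huIcc)
    · rw [intervalIntegral.integral_symm, h y x hyx (uIcc_of_ge hyx ▸ huIcc), neg_zero]
  exact (hderiv x).unique ((hasDerivAt_const x 0).congr_of_eventuallyEq primitive_eq_zero)

section IntervalIndicators

/-- The indicator function of `(c, d]` as an element of `L²(ℝ)`. -/
def intervalIndicator (c d : ℝ) : H2 :=
  indicatorConstLp 2 (measurableSet_Ioc (a := c) (b := d)) measure_Ioc_lt_top.ne (1 : ℂ)

variable {a c d : ℝ}

lemma coeFn_intervalIndicator (c d : ℝ) :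
    intervalIndicator c d =ᵐ[volume] (Ioc c d).indicator fun _ => (1 : ℂ) :=
  indicatorConstLp_coeFn

lemma integrable_intervalIndicator (c d : ℝ) : Integrable (intervalIndicator c d) :=
  (integrable_congr (coeFn_intervalIndicator c d)).2
    ((integrableOn_const measure_Ioc_lt_top.ne).integrable_indicator measurableSet_Ioc)

lemma inner_intervalIndicator (hcd : c ≤ d) (u : H2) :
    ⟪intervalIndicator c d, u⟫_ℂ = ∫ x in c..d, u x := by
  rw [intervalIndicator, L2.inner_indicatorConstLp_one, intervalIntegral.integral_of_le hcd]

lemma ae_restrict_eq_zero_of_inner_intervalIndicator {U : Set ℝ} (hU : IsOpen U) {u : H2}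
    (h : ∀ c d, c ≤ d → Icc c d ⊆ U → ⟪intervalIndicator c d, u⟫_ℂ = 0) :
    u =ᵐ[volume.restrict U] 0 :=
  ae_restrict_eq_zero_of_intervalIntegral_eq_zero ((Lp.memLp u).locallyIntegrable one_le_two) hU
    fun c d hcd hsub => by rw [← inner_intervalIndicator hcd, h c d hcd hsub]

theorem ae_restrict_Ioi_eq_zero_of_inner_intervalIndicator {A : H2 →L[ℂ] H2}
    (hA : ∀ c d c' d', c ≤ d → d ≤ a → a ≤ c' → c' ≤ d' →
      ⟪intervalIndicator c' d', A (intervalIndicator c d)⟫_ℂ = 0)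
    {ψ : H2} (hψ : ψ =ᵐ[volume.restrict (Ioi a)] 0) :
    A ψ =ᵐ[volume.restrict (Ioi a)] 0 := by
  refine ae_restrict_eq_zero_of_inner_intervalIndicator isOpen_Ioi fun c' d' hcd' hsub' => ?_
  have hac' : a ≤ c' := (hsub' (left_mem_Icc.2 hcd')).le
  have adjoint_eq_zero :
      A.adjoint (intervalIndicator c' d') =ᵐ[volume.restrict (Iic a)] 0 := by
    rw [← Measure.restrict_congr_set Iio_ae_eq_Iic]
    refine ae_restrict_eq_zero_of_inner_intervalIndicator isOpen_Iio fun c d hcd hsub => ?_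
    rw [ContinuousLinearMap.adjoint_inner_right, ← inner_conj_symm,
      hA c d c' d' hcd (hsub (right_mem_Icc.2 hcd)).le hac' hcd', map_zero]
  rw [← ContinuousLinearMap.adjoint_inner_left]
  exact inner_eq_zero_of_ae_restrict_of_ae_restrict_compl adjoint_eq_zero
    (by rwa [compl_Iic])

lemma IsFourier.coeFn_apply_intervalIndicator {𝓕 : H2 ≃ₗᵢ[ℂ] H2} (h𝓕 : IsFourier 𝓕)
    (hcd : c ≤ d) :
    𝓕 (intervalIndicator c d) =ᵐ[volume]
      fun k : ℝ => (Real.sqrt (2 * Real.pi) : ℂ)⁻¹ * expKernel (-d) (-c) k := by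
  refine (h𝓕.1 _ (integrable_intervalIndicator c d)).trans (.of_forall fun k => ?_)
  dsimp only
  congr 1
  calc ∫ x : ℝ, exp (-(I * k * x)) * intervalIndicator c d x
      = ∫ x : ℝ, (Ioc c d).indicator (fun x : ℝ => exp (-(I * k * x))) x := by
        refine integral_congr_ae ?_
        filter_upwards [coeFn_intervalIndicator c d] with x hx
        simp [hx, indicator_apply]
    _ = ∫ x : ℝ in c..d, exp (-(I * k * x)) := by
        rw [integral_indicator measurableSet_Ioc, intervalIntegral.integral_of_le hcd]
    _ = expKernel (-d) (-c) k := by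
        rw [expKernel, ← intervalIntegral.integral_comp_neg]
        simp

end IntervalIndicators

section FourierMultipliers

lemma mulLp_eq_holder {μ : Measure ℝ} {g : ℝ → ℂ} (hg : MemLp g ∞ μ) (φ : Lp ℂ 2 μ) :
    mulLp g φ = (ContinuousLinearMap.mul ℂ ℂ).holder 2 hg.toLp φ := by
  have memLp_mul : MemLp (fun x => g x * φ x) 2 μ := (Lp.memLp φ).mul hg
  rw [mulLp, dif_pos memLp_mul]
  refine MemLp.toLp_congr _ _ ?_
  filter_upwards [hg.coeFn_toLp] with x hx
  simp [hx]

/-- The operator `g(P) = 𝓕* g(M) 𝓕` with symbol `g ∈ L^∞(ℝ)`, as a bounded operator. -/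
def fourierMultiplier (𝓕 : H2 ≃ₗᵢ[ℂ] H2) (g : Lp ℂ ∞ (volume : Measure ℝ)) : H2 →L[ℂ] H2 :=
  (𝓕.symm : H2 →L[ℂ] H2) ∘L
    (ContinuousLinearMap.mul ℂ ℂ).holderL volume ∞ 2 2 g ∘L (𝓕 : H2 →L[ℂ] H2)

variable {𝓕 : H2 ≃ₗᵢ[ℂ] H2} {g : ℝ → ℂ}

lemma fourierMultiplier_toLp_apply (hg : MemLp g ∞ volume) (ψ : H2) :
    fourierMultiplier 𝓕 hg.toLp ψ = 𝓕.symm (mulLp g (𝓕 ψ)) := by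
  rw [mulLp_eq_holder hg]
  rfl

lemma norm_fourierMultiplier_le (g : Lp ℂ ∞ (volume : Measure ℝ)) :
    ‖fourierMultiplier 𝓕 g‖ ≤ ‖g‖ := by
  refine ContinuousLinearMap.opNorm_le_bound _ (norm_nonneg _) fun ψ => ?_
  calc ‖fourierMultiplier 𝓕 g ψ‖ = ‖(ContinuousLinearMap.mul ℂ ℂ).holder 2 g (𝓕 ψ)‖ :=
        𝓕.symm.norm_map _
    _ ≤ ‖ContinuousLinearMap.mul ℂ ℂ‖ * ‖g‖ * ‖𝓕 ψ‖ :=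
        ContinuousLinearMap.norm_holder_apply_apply_le _ _ _
    _ = ‖g‖ * ‖ψ‖ := by rw [ContinuousLinearMap.opNorm_mul, one_mul, 𝓕.norm_map]

lemma inner_fourierMultiplier_toLp (hg : MemLp g ∞ volume) (φ ψ : H2) :
    ⟪φ, fourierMultiplier 𝓕 hg.toLp ψ⟫_ℂ = ∫ k, conj (𝓕 φ k) * (g k * 𝓕 ψ k) := by
  rw [fourierMultiplier_toLp_apply, ← 𝓕.inner_map_map, 𝓕.apply_symm_apply, mulLp_eq_holder hg,
    L2.inner_def]
  refine integral_congr_ae ?_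
  filter_upwards [(ContinuousLinearMap.mul ℂ ℂ).coeFn_holder (r := 2) hg.toLp (𝓕 ψ),
    hg.coeFn_toLp] with k hmul hgk
  rw [hmul, ContinuousLinearMap.mul_apply', hgk, RCLike.inner_apply, mul_comm]

end FourierMultipliers

namespace HardyExt

variable {g : ℝ → ℂ} {gt : ℂ → ℂ} {𝓕 : H2 ≃ₗᵢ[ℂ] H2}

lemma memLp_top (hgt : HardyExt g gt) (hg : Measurable g) : MemLp g ∞ volume :=
  memLp_top_of_bound hg.aestronglyMeasurable 1 (.of_forall hgt.norm_le_one)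

lemma norm_fourierMultiplier_le_one (hgt : HardyExt g gt) (hg : Measurable g) :
    ‖fourierMultiplier 𝓕 (hgt.memLp_top hg).toLp‖ ≤ 1 := by
  refine (norm_fourierMultiplier_le _).trans ?_
  rw [Lp.norm_toLp]
  refine ENNReal.toReal_le_of_le_ofReal zero_le_one ?_
  rw [eLpNorm_exponent_top]
  exact eLpNormEssSup_le_of_ae_bound (.of_forall hgt.norm_le_one)

lemma inner_intervalIndicator_fourierMultiplier_eq_zero (hgt : HardyExt g gt) (hg : Measurable g)
    (h𝓕 : IsFourier 𝓕) {c d c' d' : ℝ} (hcd : c ≤ d) (hdc' : d ≤ c') (hcd' : c' ≤ d') :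
    ⟪intervalIndicator c' d',
      fourierMultiplier 𝓕 (hgt.memLp_top hg).toLp (intervalIndicator c d)⟫_ℂ = 0 := by
  rw [inner_fourierMultiplier_toLp]
  calc ∫ k, conj (𝓕 (intervalIndicator c' d') k) * (g k * 𝓕 (intervalIndicator c d) k)
      = ∫ k : ℝ, ((Real.sqrt (2 * Real.pi) : ℂ)⁻¹ ^ 2) *
          (g k * (expKernel (-d) (-c) k * expKernel c' d' k)) := by
        refine integral_congr_ae ?_
        filter_upwards [h𝓕.coeFn_apply_intervalIndicator hcd,
          h𝓕.coeFn_apply_intervalIndicator hcd'] with k hk hk'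
        rw [hk, hk', map_mul, conj_expKernel, map_inv₀, conj_ofReal, conj_ofReal, neg_neg, neg_neg]
        ring
    _ = 0 := by
        rw [integral_const_mul, hgt.integral_mul_expKernel_mul_expKernel_eq_zero
          (neg_le_neg hcd) hcd' (by linarith), mul_zero]

theorem fourierMultiplier_ae_restrict_Ici_eq_zero (hgt : HardyExt g gt) (hg : Measurable g)
    (h𝓕 : IsFourier 𝓕) {a : ℝ} {φ : H2} (hφ : φ =ᵐ[volume.restrict (Ici a)] 0) :
    fourierMultiplier 𝓕 (hgt.memLp_top hg).toLp φ =ᵐ[volume.restrict (Ici a)] 0 := by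
  rw [← restrict_Ioi_eq_restrict_Ici] at hφ ⊢
  exact ae_restrict_Ioi_eq_zero_of_inner_intervalIndicator
    (fun _ _ _ _ hcd hda hac' hcd' => hgt.inner_intervalIndicator_fourierMultiplier_eq_zero hg h𝓕
      hcd (hda.trans hac') hcd') hφ

end HardyExt

/-- If `g : ℝ → ℂ` is measurable with a bounded analytic extension to the
upper half-plane having boundary values `g` a.e., then
`g(P)* χ_{[a,∞)}(Q) g(P) ≤ χ_{[a,∞)}(Q)` for every `a ∈ ℝ`: for all `ψ ∈ L²(ℝ)`,
`∫_{[a,∞)} |(F*(g·(Fψ)))(x)|² dx ≤ ∫_{[a,∞)} |ψ(x)|² dx`. -/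
theorem statement9 (g : ℝ → ℂ) (hg : Measurable g) (gt : ℂ → ℂ) (hgt : HardyExt g gt)
    (𝓕 : H2 ≃ₗᵢ[ℂ] H2) (h𝓕 : IsFourier 𝓕) (a : ℝ) (ψ : H2) :
    ∫ x in Set.Ici a, ‖(𝓕.symm (mulLp g (𝓕 ψ))) x‖ ^ 2 ≤
      ∫ x in Set.Ici a, ‖ψ x‖ ^ 2 := by
  rw [← fourierMultiplier_toLp_apply (hgt.memLp_top hg)]
  exact integral_norm_sq_le_of_eLpNorm_two_le ((Lp.memLp _).restrict _) ((Lp.memLp _).restrict _)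
    (eLpNorm_restrict_apply_le_of_preserves_ae_zero measurableSet_Ici
      (hgt.norm_fourierMultiplier_le_one hg)
      (fun _ => hgt.fourierMultiplier_ae_restrict_Ici_eq_zero hg h𝓕) ψ)
end
end

section
/- Let μ be a Borel probability measure on ℝ, let a ∈ ℝ, and let φ ∈ L²(ℝ) satisfy (Fφ)(k) = 0 for almost all k > 0 (only non-positive momenta). For t ∈ ℝ define the freely evolved state φ_t := F*(k ↦ e^{-itk²}(Fφ)(k)). Then lim_{t→+∞} ∫_ℝ μ([a−x, ∞))² |φ_t(x)|² dx = 0. Equivalently, the localization observable E = μ * E^Q, whose value E([a,∞)) is the multiplication operator by x ↦ μ([a−x,∞)), satisfies s-lim_{t→∞} E([a,∞)) e^{-itH₀} P̌₋ = 0, where P̌₋ is the projection onto states with Fourier transform supported in (−∞,0]. -/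
open MeasureTheory Complex Filter Set
open scoped ENNReal NNReal

noncomputable section

/-!
In the momentum representation the evolved state is
`φ_t(x) = (2π)^{-1/2} ∫ e^{i(xk - tk²)} ψ(k) dk` with `ψ = 𝓕φ`, and the phase has derivative
`x - 2tk`. If `ψ` is a test function supported in `k ≤ -ε < 0`, this derivative is at least
`x + 2tε > 0` for `x ≥ -tε`, so a single integration by parts gives `|φ_t(x)| ≤ C / (x + 2tε)`,
whence the mass of `φ_t` on `(c, ∞)` is at most `C² / (c + 2tε) → 0`. Such `ψ` are dense among the
amplitudes vanishing on `(0, ∞)`, and the evolution is isometric, so the mass on `(c, ∞)` tends to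
`0` for all of them. Finally `x ↦ μ([a - x, ∞))` is bounded and tends to `0` at `-∞`: choosing `c`
so that it is small on `(-∞, c]`, the weighted mass there is small uniformly in `t`.
-/

open scoped Topology Distributions ContDiff

section SquareIntegrable

variable {α E : Type*} [MeasurableSpace α] {μ : Measure α} [NormedAddCommGroup E]

lemma integrable_norm_sq_coeFn (f : Lp E 2 μ) : Integrable (fun x => ‖f x‖ ^ 2) μ :=
  (Lp.memLp f).integrable_norm_pow two_ne_zero

lemma norm_sq_eq_integral_norm_sq [InnerProductSpace ℂ E] (f : Lp E 2 μ) :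
    ‖f‖ ^ 2 = ∫ x, ‖f x‖ ^ 2 ∂μ := by
  rw [← inner_self_eq_norm_sq (𝕜 := ℂ), L2.inner_def, ← integral_re (L2.integrable_inner f f)]
  simp only [inner_self_eq_norm_sq]

lemma norm_LpToLpRestrictCLM_sq [InnerProductSpace ℂ E] (s : Set α) (f : Lp E 2 μ) :
    ‖LpToLpRestrictCLM α E ℂ μ 2 s f‖ ^ 2 = ∫ x in s, ‖f x‖ ^ 2 ∂μ := by
  rw [norm_sq_eq_integral_norm_sq]
  refine integral_congr_ae ?_
  filter_upwards [LpToLpRestrictCLM_coeFn ℂ s f] with x hx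
  rw [hx]

end SquareIntegrable

section Density

variable {E : Type*} [NormedAddCommGroup E] [NormedSpace ℝ E] [MeasurableSpace E] [BorelSpace E]
  {U : TopologicalSpace.Opens E}

/-- The inclusion of the complex test functions on `U` into `L²(μ)`. -/
def testFunctionToL2 (U : TopologicalSpace.Opens E) (μ : Measure E)
    [IsFiniteMeasureOnCompacts μ] : 𝓓(U, ℂ) →ₗ[ℂ] Lp ℂ 2 μ where
  toFun g := (g.continuous.memLp_of_hasCompactSupport g.hasCompactSupport).toLp g
  map_add' _ _ := rfl
  map_smul' _ _ := rfl

lemma coeFn_testFunctionToL2 (μ : Measure E) [IsFiniteMeasureOnCompacts μ] (g : 𝓓(U, ℂ)) :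
    testFunctionToL2 U μ g =ᵐ[μ] g :=
  (g.continuous.memLp_of_hasCompactSupport g.hasCompactSupport).coeFn_toLp

variable [FiniteDimensional ℝ E] {μ : Measure E} [IsLocallyFiniteMeasure μ]

lemma ae_eq_zero_of_mem_orthogonal_testFunctions {η : Lp ℂ 2 μ}
    (hη : η ∈ (LinearMap.range (testFunctionToL2 U μ))ᗮ) : ∀ᵐ x ∂μ, x ∈ U → η x = 0 := by
  have hη_loc : LocallyIntegrable η μ := (Lp.memLp η).locallyIntegrable one_le_two
  refine U.isOpen.ae_eq_zero_of_integral_contDiff_smul_eq_zero (hη_loc.locallyIntegrableOn _)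
    fun g hg hgc hgU => ?_
  let G : 𝓓(U, ℂ) := ⟨fun x => (g x : ℂ), ofRealCLM.contDiff.comp hg,
    hgc.comp_left ofReal_zero,
    (closure_mono (Function.support_comp_subset ofReal_zero g)).trans hgU⟩
  rw [← (Submodule.mem_orthogonal _ _).1 hη _ (LinearMap.mem_range_self _ G), L2.inner_def]
  refine integral_congr_ae ?_
  filter_upwards [coeFn_testFunctionToL2 μ G] with x hx
  rw [hx]
  change (g x : ℂ) * η x = η x * starRingEnd ℂ (g x : ℂ)
  rw [conj_ofReal, mul_comm]

lemma mem_closure_testFunctions {ψ : Lp ℂ 2 μ} (hψ : ∀ᵐ x ∂μ, x ∉ U → ψ x = 0) :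
    ψ ∈ closure (range (testFunctionToL2 U μ)) := by
  rw [← LinearMap.coe_range, ← Submodule.topologicalClosure_coe, SetLike.mem_coe,
    ← Submodule.orthogonal_orthogonal_eq_closure, Submodule.mem_orthogonal]
  intro η hη
  rw [L2.inner_def]
  refine integral_eq_zero_of_ae ?_
  filter_upwards [hψ, ae_eq_zero_of_mem_orthogonal_testFunctions hη] with x hψx hηx
  by_cases hx : x ∈ U
  · simp [hηx hx]
  · simp [hψx hx]

end Density

section MulLp

variable {μ : Measure ℝ} {g : ℝ → ℂ}

lemma coeFn_mulLp {f : Lp ℂ 2 μ} (h : MemLp (fun x => g x * f x) 2 μ) :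
    mulLp g f =ᵐ[μ] fun x => g x * f x := by
  rw [mulLp, dif_pos h]
  exact h.coeFn_toLp

lemma coeFn_mulLp_of_norm_eq_one (hg : AEStronglyMeasurable g μ) (hg_norm : ∀ x, ‖g x‖ = 1)
    (f : Lp ℂ 2 μ) : mulLp g f =ᵐ[μ] fun x => g x * f x :=
  coeFn_mulLp ((Lp.memLp f).of_le (hg.mul (Lp.aestronglyMeasurable f)) (by simp [hg_norm]))

/-- Multiplication by a unimodular function, as an isometry of `L²`. -/
def unimodularMulLp (hg : AEStronglyMeasurable g μ) (hg_norm : ∀ x, ‖g x‖ = 1) :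
    Lp ℂ 2 μ →ₗᵢ[ℂ] Lp ℂ 2 μ where
  toFun := mulLp g
  map_add' f₁ f₂ := by
    refine Lp.ext ?_
    filter_upwards [coeFn_mulLp_of_norm_eq_one hg hg_norm f₁,
      coeFn_mulLp_of_norm_eq_one hg hg_norm f₂, coeFn_mulLp_of_norm_eq_one hg hg_norm (f₁ + f₂),
      Lp.coeFn_add f₁ f₂, Lp.coeFn_add (mulLp g f₁) (mulLp g f₂)] with x h₁ h₂ h₁₂ hadd hmul
    rw [h₁₂, hadd, hmul, Pi.add_apply, Pi.add_apply, h₁, h₂, mul_add]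
  map_smul' c f := by
    refine Lp.ext ?_
    filter_upwards [coeFn_mulLp_of_norm_eq_one hg hg_norm f,
      coeFn_mulLp_of_norm_eq_one hg hg_norm (c • f), Lp.coeFn_smul c f,
      Lp.coeFn_smul c (mulLp g f)] with x h hc hsmul hmul
    rw [hc, hsmul, RingHom.id_apply, hmul, Pi.smul_apply, Pi.smul_apply, h, mul_smul_comm]
  norm_map' f := by
    have norm_eq : ∀ᵐ x ∂μ, ‖mulLp g f x‖ = ‖f x‖ := by
      filter_upwards [coeFn_mulLp_of_norm_eq_one hg hg_norm f] with x hx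
      rw [hx, norm_mul, hg_norm, one_mul]
    exact congrArg ENNReal.toReal (eLpNorm_congr_norm_ae norm_eq)

end MulLp

section NonstationaryPhase

variable {θ : ℝ → ℝ} {g : ℝ → ℂ}

lemma hasDerivAt_cexp_I_mul_ofReal {θ' k : ℝ} (hθ : HasDerivAt θ θ' k) :
    HasDerivAt (fun k => cexp (I * θ k)) (cexp (I * θ k) * (I * θ')) k :=
  (hθ.ofReal_comp.const_mul I).cexp

lemma norm_integral_cexp_mul_deriv_smul_le (hθ : ContDiff ℝ 1 θ) (hg : ContDiff ℝ 1 g)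
    (hgc : HasCompactSupport g) :
    ‖∫ k, cexp (I * θ k) * deriv θ k • g k‖ ≤ ∫ k, ‖deriv g k‖ := by
  have hθ_cont : Continuous θ := hθ.continuous
  have hθ'_cont : Continuous (deriv θ) := hθ.continuous_deriv le_rfl
  have hexp : Continuous fun k => cexp (I * θ k) := by fun_prop
  have hexp' : Continuous fun k => cexp (I * θ k) * (I * deriv θ k) :=
    hexp.mul (continuous_const.mul (continuous_ofReal.comp hθ'_cont))
  have parts : ∫ k, cexp (I * θ k) * deriv g k
      = -∫ k, cexp (I * θ k) * (I * deriv θ k) * g k :=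
    integral_mul_deriv_eq_deriv_mul_of_integrable
      (fun k _ => hasDerivAt_cexp_I_mul_ofReal (hθ.differentiable one_ne_zero k).hasDerivAt)
      (fun k _ => (hg.differentiable one_ne_zero k).hasDerivAt)
      ((hexp.mul (hg.continuous_deriv le_rfl)).integrable_of_hasCompactSupport hgc.deriv.mul_left)
      ((hexp'.mul hg.continuous).integrable_of_hasCompactSupport hgc.mul_left)
      ((hexp.mul hg.continuous).integrable_of_hasCompactSupport hgc.mul_left)
  calc ‖∫ k, cexp (I * θ k) * deriv θ k • g k‖
      = ‖I * ∫ k, cexp (I * θ k) * deriv θ k • g k‖ := by rw [norm_mul, norm_I, one_mul]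
    _ = ‖∫ k, cexp (I * θ k) * (I * deriv θ k) * g k‖ := by
        rw [← integral_const_mul]
        congr 2 with k
        rw [real_smul]
        ring
    _ = ‖∫ k, cexp (I * θ k) * deriv g k‖ := by rw [parts, norm_neg]
    _ ≤ ∫ k, ‖cexp (I * θ k) * deriv g k‖ := norm_integral_le_integral_norm _
    _ = ∫ k, ‖deriv g k‖ := by simp only [norm_mul, norm_exp_I_mul_ofReal, one_mul]

lemma contDiff_inv_smul_of_ne_zero_on_tsupport {E F : Type*} [NormedAddCommGroup E]
    [NormedSpace ℝ E] [NormedAddCommGroup F] [NormedSpace ℝ F] {n : WithTop ℕ∞} {d : E → ℝ}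
    {f : E → F} (hd : ContDiff ℝ n d) (hf : ContDiff ℝ n f) (hne : ∀ x ∈ tsupport f, d x ≠ 0) :
    ContDiff ℝ n fun x => (d x)⁻¹ • f x := by
  rw [← contMDiff_iff_contDiff]
  refine contMDiff_of_tsupport fun x hx => ContDiffAt.contMDiffAt ?_
  have hx : x ∈ tsupport f := tsupport_smul_subset_right (fun x => (d x)⁻¹) f hx
  exact (hd.contDiffAt.inv (hne x hx)).smul hf.contDiffAt

lemma norm_integral_cexp_mul_le_integral_norm_deriv_inv_smul (hθ : ContDiff ℝ 2 θ)
    (hg : ContDiff ℝ 1 g) (hgc : HasCompactSupport g) (hne : ∀ k ∈ tsupport g, deriv θ k ≠ 0) :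
    ‖∫ k, cexp (I * θ k) * g k‖ ≤ ∫ k, ‖deriv (fun k => (deriv θ k)⁻¹ • g k) k‖ := by
  have smul_inv_smul : ∀ k, g k = deriv θ k • (deriv θ k)⁻¹ • g k := fun k => by
    by_cases hk : k ∈ tsupport g
    · rw [smul_inv_smul₀ (hne k hk)]
    · rw [image_eq_zero_of_notMem_tsupport hk, smul_zero, smul_zero]
  calc ‖∫ k, cexp (I * θ k) * g k‖
      = ‖∫ k, cexp (I * θ k) * deriv θ k • (deriv θ k)⁻¹ • g k‖ := by simp_rw [← smul_inv_smul]
    _ ≤ ∫ k, ‖deriv (fun k => (deriv θ k)⁻¹ • g k) k‖ :=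
        norm_integral_cexp_mul_deriv_smul_le (hθ.of_le one_le_two)
          (contDiff_inv_smul_of_ne_zero_on_tsupport (hθ.deriv' (n := 1)) hg hne)
          (hgc.smul_left (f := fun k => (deriv θ k)⁻¹))

end NonstationaryPhase

section QuadraticPhase

variable {g : ℝ → ℂ} {t x ε : ℝ}

lemma deriv_quadraticPhase (t x : ℝ) :
    deriv (fun k : ℝ => x * k - t * k ^ 2) = fun k => x - 2 * t * k := by
  ext k
  have h := ((hasDerivAt_id k).const_mul x).sub (((hasDerivAt_id k).pow 2).const_mul t)
  refine (h.congr_deriv ?_).deriv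
  simp only [id]
  ring

lemma norm_deriv_inv_quadraticPhase_smul_le {E : Type*} [NormedAddCommGroup E] [NormedSpace ℝ E]
    {g : ℝ → E} {k : ℝ} (hg : Differentiable ℝ g) (hε : 0 < ε) (ht : 0 < t)
    (hx : -(t * ε) ≤ x) (hk : k ≤ -ε) :
    ‖deriv (fun k => (x - 2 * t * k)⁻¹ • g k) k‖
      ≤ (‖deriv g k‖ + 2 / ε * ‖g k‖) / (x + 2 * t * ε) := by
  have htε : 0 < t * ε := mul_pos ht hε
  have hderiv_denom : HasDerivAt (fun k => x - 2 * t * k) (-(2 * t)) k := by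
    simpa using ((hasDerivAt_id k).const_mul (2 * t)).const_sub x
  have hle : x + 2 * t * ε ≤ x - 2 * t * k := by nlinarith
  set d := x - 2 * t * k
  set v := x + 2 * t * ε
  have hv_pos : 0 < v := by linarith
  have hd_pos : 0 < d := by linarith
  have hderiv : deriv (fun k => (x - 2 * t * k)⁻¹ • g k) k
      = d⁻¹ • deriv g k + (2 * t / d ^ 2) • g k := by
    refine ((hderiv_denom.inv hd_pos.ne').smul (hg k).hasDerivAt).deriv.trans ?_
    rw [neg_neg, Pi.inv_apply]
  have hcoeff : 2 * t / d ^ 2 ≤ 2 / ε / v := by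
    rw [div_div, div_le_div_iff₀ (by positivity) (by positivity), sq]
    nlinarith [mul_le_mul (show t * ε ≤ d by linarith) hle hv_pos.le hd_pos.le]
  calc ‖deriv (fun k => (x - 2 * t * k)⁻¹ • g k) k‖
      ≤ ‖d⁻¹ • deriv g k‖ + ‖(2 * t / d ^ 2) • g k‖ := hderiv ▸ norm_add_le _ _
    _ = d⁻¹ * ‖deriv g k‖ + 2 * t / d ^ 2 * ‖g k‖ := by
        rw [norm_smul, norm_smul, Real.norm_of_nonneg (by positivity),
          Real.norm_of_nonneg (by positivity)]
    _ ≤ v⁻¹ * ‖deriv g k‖ + 2 / ε / v * ‖g k‖ := by gcongr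
    _ = (‖deriv g k‖ + 2 / ε * ‖g k‖) / v := by ring

lemma norm_integral_cexp_quadraticPhase_mul_le (hg : ContDiff ℝ 1 g) (hgc : HasCompactSupport g)
    (hε : 0 < ε) (hgε : tsupport g ⊆ Iic (-ε)) (ht : 0 < t) (hx : -(t * ε) ≤ x) :
    ‖∫ k : ℝ, cexp (I * (x * k - t * k ^ 2 : ℝ)) * g k‖
      ≤ ((∫ k, ‖deriv g k‖) + 2 / ε * ∫ k, ‖g k‖) / (x + 2 * t * ε) := by
  have hspeed : 0 < x + 2 * t * ε := by nlinarith
  have hne : ∀ k ∈ tsupport g, deriv (fun k : ℝ => x * k - t * k ^ 2) k ≠ 0 := fun k hk => by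
    have : k ≤ -ε := hgε hk
    rw [deriv_quadraticPhase]
    exact ne_of_gt (by nlinarith)
  have hg_int : Integrable fun k => ‖g k‖ :=
    (hg.continuous.integrable_of_hasCompactSupport hgc).norm
  have hg'_int : Integrable fun k => ‖deriv g k‖ :=
    ((hg.continuous_deriv le_rfl).integrable_of_hasCompactSupport hgc.deriv).norm
  refine (norm_integral_cexp_mul_le_integral_norm_deriv_inv_smul (by fun_prop) hg hgc hne).trans ?_
  rw [deriv_quadraticPhase, ← integral_const_mul, ← integral_add hg'_int (hg_int.const_mul _),
    ← integral_div]
  refine integral_mono_of_nonneg (.of_forall fun _ => norm_nonneg _)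
    ((hg'_int.add (hg_int.const_mul _)).div_const _) (.of_forall fun k => ?_)
  by_cases hk : k ∈ tsupport g
  · exact norm_deriv_inv_quadraticPhase_smul_le (hg.differentiable one_ne_zero) hε ht hx (hgε hk)
  · have hk' : k ∉ tsupport fun k => (x - 2 * t * k)⁻¹ • g k :=
      fun h => hk (tsupport_smul_subset_right _ g h)
    beta_reduce
    rw [image_eq_zero_of_notMem_tsupport (mt (fun h => tsupport_deriv_subset h) hk'), norm_zero]
    positivity

end QuadraticPhase

section InverseSquareTail

variable {A c : ℝ}

lemma hasDerivAt_neg_inv_add {x : ℝ} (hx : x + A ≠ 0) :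
    HasDerivAt (fun x => -(x + A)⁻¹) ((x + A)⁻¹ ^ 2) x := by
  refine (((hasDerivAt_id x).add_const A).inv hx).neg.congr_deriv ?_
  rw [neg_div, neg_neg, one_div, inv_pow, id]

lemma tendsto_neg_inv_add_atTop (A : ℝ) : Tendsto (fun x => -(x + A)⁻¹) atTop (𝓝 0) := by
  simpa using (tendsto_inv_atTop_zero.comp (tendsto_atTop_add_const_right _ A tendsto_id)).neg

lemma integrableOn_Ioi_inv_add_sq (hc : 0 < c + A) :
    IntegrableOn (fun x => (x + A)⁻¹ ^ 2) (Ioi c) :=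
  integrableOn_Ioi_deriv_of_nonneg'
    (fun x hx => hasDerivAt_neg_inv_add (by linarith [mem_Ici.1 hx]))
    (fun _ _ => sq_nonneg _) (tendsto_neg_inv_add_atTop A)

lemma integral_Ioi_inv_add_sq (hc : 0 < c + A) :
    ∫ x in Ioi c, (x + A)⁻¹ ^ 2 = (c + A)⁻¹ := by
  rw [integral_Ioi_of_hasDerivAt_of_nonneg'
    (fun x hx => hasDerivAt_neg_inv_add (by linarith [mem_Ici.1 hx]))
    (fun _ _ => sq_nonneg _) (tendsto_neg_inv_add_atTop A)]
  ring

lemma setIntegral_Ioi_norm_sq_le_of_norm_le_div {E : Type*} [NormedAddCommGroup E] {f : ℝ → E}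
    {C : ℝ} (hc : 0 < c + A) (hf : ∀ᵐ x, c < x → ‖f x‖ ≤ C / (x + A)) :
    ∫ x in Ioi c, ‖f x‖ ^ 2 ≤ C ^ 2 * (c + A)⁻¹ := by
  rw [← integral_Ioi_inv_add_sq hc, ← integral_const_mul]
  refine integral_mono_of_nonneg (.of_forall fun _ => sq_nonneg _)
    ((integrableOn_Ioi_inv_add_sq hc).const_mul _) ?_
  filter_upwards [(ae_restrict_iff' measurableSet_Ioi).2 hf] with x hx
  rw [← mul_pow, ← div_eq_mul_inv]
  exact pow_le_pow_left₀ (norm_nonneg _) hx 2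

end InverseSquareTail

section FreeEvolution

/-- The factor by which the free evolution up to time `t` multiplies the momentum amplitude
at `k`. -/
def freePhase (t k : ℝ) : ℂ := cexp (-(I * t * k ^ 2))

lemma norm_freePhase (t k : ℝ) : ‖freePhase t k‖ = 1 := by
  rw [freePhase, ← norm_exp_I_mul_ofReal (-(t * k ^ 2))]
  push_cast
  ring_nf

lemma continuous_freePhase (t : ℝ) : Continuous (freePhase t) := by
  unfold freePhase
  fun_prop

lemma cexp_mul_freePhase (t x k : ℝ) :
    cexp (I * x * k) * freePhase t k = cexp (I * (x * k - t * k ^ 2 : ℝ)) := by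
  rw [freePhase, ← Complex.exp_add]
  push_cast
  ring_nf

/-- The position-space wave function at time `t` of the free particle whose initial momentum
amplitude is `ψ`, i.e. `ψ ↦ e^{-itH₀} 𝓕⁻¹ ψ`. -/
def freeEvolution (𝓕 : H2 ≃ₗᵢ[ℂ] H2) (t : ℝ) : H2 →ₗᵢ[ℂ] H2 :=
  𝓕.symm.toLinearIsometry.comp
    (unimodularMulLp (continuous_freePhase t).aestronglyMeasurable (norm_freePhase t))

variable {𝓕 : H2 ≃ₗᵢ[ℂ] H2}

lemma freeEvolution_ae_eq_integral (h𝓕 : IsFourier 𝓕) {ψ : H2} (hψ : Integrable ψ) (t : ℝ) :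
    freeEvolution 𝓕 t ψ =ᵐ[volume] fun x : ℝ =>
      (Real.sqrt (2 * Real.pi) : ℂ)⁻¹ * ∫ k : ℝ, cexp (I * (x * k - t * k ^ 2 : ℝ)) * ψ k := by
  have hmul := coeFn_mulLp_of_norm_eq_one (continuous_freePhase t).aestronglyMeasurable
    (norm_freePhase t) ψ
  have hint : Integrable (mulLp (freePhase t) ψ) :=
    (hψ.bdd_mul (c := 1) (continuous_freePhase t).aestronglyMeasurable
      (.of_forall fun k => (norm_freePhase t k).le)).congr hmul.symm
  filter_upwards [h𝓕.2 _ hint] with x hx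
  refine hx.trans (congrArg _ (integral_congr_ae ?_))
  filter_upwards [hmul] with k hk
  rw [hk, ← mul_assoc, cexp_mul_freePhase]

/-- The open half-line of momenta `k < 0`. -/
def negativeMomenta : TopologicalSpace.Opens ℝ := ⟨Iio 0, isOpen_Iio⟩

lemma exists_tsupport_subset_Iic_neg (g : 𝓓(negativeMomenta, ℂ)) :
    ∃ ε > 0, tsupport g ⊆ Iic (-ε) := by
  obtain ⟨ε, hε, hgε⟩ := g.hasCompactSupport.isCompact.exists_forall_le' continuous_neg.continuousOn
    (a := 0) fun k hk => neg_pos.2 (g.tsupport_subset hk)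
  exact ⟨ε, hε, fun k hk => le_neg_of_le_neg (hgε k hk)⟩

lemma exists_norm_freeEvolution_testFunction_le (h𝓕 : IsFourier 𝓕)
    (g : 𝓓(negativeMomenta, ℂ)) :
    ∃ ε > 0, ∃ C, ∀ t > 0, ∀ᵐ x : ℝ, -(t * ε) ≤ x →
      ‖freeEvolution 𝓕 t (testFunctionToL2 _ volume g) x‖ ≤ C / (x + 2 * t * ε) := by
  obtain ⟨ε, hε, hgε⟩ := exists_tsupport_subset_Iic_neg g
  have hg_coe := coeFn_testFunctionToL2 volume g
  have hg_int : Integrable (testFunctionToL2 _ volume g) :=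
    (g.continuous.integrable_of_hasCompactSupport g.hasCompactSupport).congr hg_coe.symm
  refine ⟨ε, hε, ‖(Real.sqrt (2 * Real.pi) : ℂ)⁻¹‖ *
    ((∫ k, ‖deriv g k‖) + 2 / ε * ∫ k, ‖g k‖), fun t ht => ?_⟩
  filter_upwards [freeEvolution_ae_eq_integral h𝓕 hg_int t] with x hx hxt
  have integral_eq : ∫ k : ℝ, cexp (I * (x * k - t * k ^ 2 : ℝ)) * testFunctionToL2 _ volume g k
      = ∫ k : ℝ, cexp (I * (x * k - t * k ^ 2 : ℝ)) * g k :=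
    integral_congr_ae (hg_coe.mono fun k hk => congrArg _ hk)
  rw [hx, integral_eq, norm_mul, mul_div_assoc]
  gcongr
  exact norm_integral_cexp_quadraticPhase_mul_le (g.contDiff.of_le (mod_cast le_top))
    g.hasCompactSupport hε hgε ht hxt

lemma tendsto_setIntegral_freeEvolution_testFunction (h𝓕 : IsFourier 𝓕)
    (g : 𝓓(negativeMomenta, ℂ)) (c : ℝ) :
    Tendsto (fun t => ∫ x in Ioi c, ‖freeEvolution 𝓕 t (testFunctionToL2 _ volume g) x‖ ^ 2)
      atTop (𝓝 0) := by
  obtain ⟨ε, hε, C, hC⟩ := exists_norm_freeEvolution_testFunction_le h𝓕 g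
  have htε : Tendsto (fun t => c + t * ε) atTop atTop :=
    tendsto_atTop_add_const_left _ c (tendsto_id.atTop_mul_const hε)
  have htε' : Tendsto (fun t => c + 2 * t * ε) atTop atTop :=
    tendsto_atTop_add_const_left _ c
      ((tendsto_id.const_mul_atTop two_pos).atTop_mul_const hε)
  have hbound : Tendsto (fun t => C ^ 2 * (c + 2 * t * ε)⁻¹) atTop (𝓝 0) := by
    simpa using (tendsto_inv_atTop_zero.comp htε').const_mul (C ^ 2)
  refine squeeze_zero' (.of_forall fun t => integral_nonneg fun x => sq_nonneg _) ?_ hbound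
  filter_upwards [eventually_gt_atTop 0, htε.eventually_gt_atTop 0,
    htε'.eventually_gt_atTop 0] with t ht hct hct'
  refine setIntegral_Ioi_norm_sq_le_of_norm_le_div hct' ?_
  filter_upwards [hC t ht] with x hx hcx
  exact hx (by linarith)

lemma equicontinuous_restrict_freeEvolution (𝓕 : H2 ≃ₗᵢ[ℂ] H2) (s : Set ℝ) :
    Equicontinuous fun t ψ => LpToLpRestrictCLM ℝ ℂ ℂ volume 2 s (freeEvolution 𝓕 t ψ) := by
  refine (LipschitzWith.uniformEquicontinuous _ 1 fun t => ?_).equicontinuous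
  refine LipschitzWith.of_dist_le_mul fun ψ χ => ?_
  rw [dist_eq_norm, ← map_sub, ← map_sub, NNReal.coe_one, one_mul, dist_eq_norm]
  exact (norm_Lp_toLp_restrict_le s _).trans_eq ((freeEvolution 𝓕 t).norm_map _)

lemma tendsto_setIntegral_freeEvolution (h𝓕 : IsFourier 𝓕) {ψ : H2}
    (hψ : ∀ᵐ k ∂(volume.restrict (Ioi 0)), ψ k = 0) (c : ℝ) :
    Tendsto (fun t => ∫ x in Ioi c, ‖freeEvolution 𝓕 t ψ x‖ ^ 2) atTop (𝓝 0) := by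
  have hψ_off : ∀ᵐ k, k ∉ negativeMomenta → ψ k = 0 := by
    rw [Measure.restrict_congr_set Ioi_ae_eq_Ici, ae_restrict_iff' measurableSet_Ici] at hψ
    exact hψ.mono fun k hψk hk => hψk (mem_Ici.2 (not_lt.1 hk))
  have hψ_closure := mem_closure_testFunctions hψ_off
  have hlim := (equicontinuous_restrict_freeEvolution 𝓕 (Ioi c) ψ).tendsto_of_mem_closure
    (f := 0) (l := atTop) (z := 0) tendsto_const_nhds ?_ hψ_closure
  · simpa [norm_LpToLpRestrictCLM_sq] using hlim.norm.pow 2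
  · rintro _ ⟨g, rfl⟩
    rw [Pi.zero_apply, tendsto_zero_iff_norm_tendsto_zero]
    have hsq := (tendsto_setIntegral_freeEvolution_testFunction h𝓕 g c).sqrt
    simpa [← norm_LpToLpRestrictCLM_sq] using hsq

end FreeEvolution

section Weight

variable {ν : Measure ℝ} {E : Type*} [NormedAddCommGroup E] [InnerProductSpace ℂ E]
  {w : ℝ → ℝ} {B : ℝ}

lemma integral_sq_mul_norm_sq_le {δ c : ℝ} (hw : AEStronglyMeasurable w ν)
    (hB : ∀ x, |w x| ≤ B) (hδ : ∀ x ≤ c, |w x| ≤ δ) (f : Lp E 2 ν) :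
    ∫ x, w x ^ 2 * ‖f x‖ ^ 2 ∂ν ≤ δ ^ 2 * ‖f‖ ^ 2 + B ^ 2 * ∫ x in Ioi c, ‖f x‖ ^ 2 ∂ν := by
  have hf := integrable_norm_sq_coeFn f
  have hwB : ∀ x, w x ^ 2 ≤ B ^ 2 := fun x =>
    sq_le_sq' (neg_le_of_abs_le (hB x)) (le_of_abs_le (hB x))
  have hwf : Integrable (fun x => w x ^ 2 * ‖f x‖ ^ 2) ν :=
    hf.bdd_mul (c := B ^ 2) (hw.pow 2) (.of_forall fun x => by
      rw [Real.norm_of_nonneg (sq_nonneg _)]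
      exact hwB x)
  have hdom := (hf.const_mul (B ^ 2)).indicator (measurableSet_Ioi (a := c))
  rw [norm_sq_eq_integral_norm_sq, ← integral_const_mul, ← integral_const_mul,
    ← integral_indicator measurableSet_Ioi, ← integral_add (hf.const_mul _) hdom]
  refine integral_mono hwf ((hf.const_mul _).add hdom) fun x => ?_
  rcases le_or_gt x c with hx | hx
  · have hwδ := sq_le_sq' (neg_le_of_abs_le (hδ x hx)) (le_of_abs_le (hδ x hx))
    rw [indicator_of_notMem (notMem_Ioi.2 hx), add_zero]
    gcongr
  · rw [indicator_of_mem (mem_Ioi.2 hx), ← add_mul]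
    gcongr
    exact (hwB x).trans (le_add_of_nonneg_left (sq_nonneg δ))

lemma tendsto_integral_sq_mul_norm_sq {ι : Type*} {l : Filter ι} {f : ι → Lp E 2 ν} {M : ℝ}
    (hw : AEStronglyMeasurable w ν) (hB : ∀ x, |w x| ≤ B) (hw₀ : Tendsto w atBot (𝓝 0))
    (hM : ∀ i, ‖f i‖ ≤ M)
    (hf : ∀ c, Tendsto (fun i => ∫ x in Ioi c, ‖f i x‖ ^ 2 ∂ν) l (𝓝 0)) :
    Tendsto (fun i => ∫ x, w x ^ 2 * ‖f i x‖ ^ 2 ∂ν) l (𝓝 0) := by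
  refine tendsto_order.2 ⟨fun b hb => .of_forall fun i => hb.trans_le <| integral_nonneg
    fun x => by positivity, fun b hb => ?_⟩
  have hδ_lim : Tendsto (fun δ : ℝ => δ ^ 2 * M ^ 2) (𝓝[>] 0) (𝓝 0) := by
    refine (Continuous.tendsto' (by fun_prop) _ _ ?_).mono_left nhdsWithin_le_nhds
    simp
  obtain ⟨δ, hδb, hδ⟩ := ((hδ_lim.eventually_lt_const hb).and self_mem_nhdsWithin).exists
  obtain ⟨c, hc⟩ := eventually_atBot.1 (hw₀.abs.eventually_le_const (by simpa using hδ))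
  have htail : Tendsto (fun i => δ ^ 2 * M ^ 2 + B ^ 2 * ∫ x in Ioi c, ‖f i x‖ ^ 2 ∂ν) l
      (𝓝 (δ ^ 2 * M ^ 2)) := by
    simpa using ((hf c).const_mul (B ^ 2)).const_add (δ ^ 2 * M ^ 2)
  filter_upwards [htail.eventually_lt_const hδb] with i hi
  refine ((integral_sq_mul_norm_sq_le hw hB hc (f i)).trans ?_).trans_lt hi
  gcongr
  exact hM i

end Weight

section UpperTail

variable (μ : Measure ℝ) [IsFiniteMeasure μ] (a : ℝ)

lemma monotone_measureReal_Ici_sub : Monotone fun x => μ.real (Ici (a - x)) :=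
  fun _ _ h => measureReal_mono (Ici_subset_Ici.2 (sub_le_sub_left h a))

lemma tendsto_measureReal_Ici_atTop : Tendsto (fun b => μ.real (Ici b)) atTop (𝓝 0) := by
  have h := tendsto_measure_iInter_atTop (μ := μ) (s := Ici) (fun b : ℝ => nullMeasurableSet_Ici)
    antitone_Ici ⟨0, measure_ne_top _ _⟩
  have hinter : ⋂ b : ℝ, Ici b = ∅ :=
    eq_empty_of_forall_notMem fun x hx => (lt_add_one x).not_ge (mem_iInter.1 hx (x + 1))
  rw [hinter, measure_empty] at h
  exact (ENNReal.tendsto_toReal ENNReal.zero_ne_top).comp h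

lemma tendsto_measureReal_Ici_sub_atBot :
    Tendsto (fun x => μ.real (Ici (a - x))) atBot (𝓝 0) :=
  (tendsto_measureReal_Ici_atTop μ).comp (tendsto_atTop_add_const_left _ a tendsto_neg_atBot_atTop)

end UpperTail

theorem statement10_general {w : ℝ → ℝ} {B : ℝ} (hw : AEStronglyMeasurable w)
    (hB : ∀ x, |w x| ≤ B) (hw₀ : Tendsto w atBot (𝓝 0)) (𝓕 : H2 ≃ₗᵢ[ℂ] H2) (h𝓕 : IsFourier 𝓕)
    (φ : H2) (hφ : ∀ᵐ k ∂(volume.restrict (Ioi (0 : ℝ))), 𝓕 φ k = 0) :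
    Tendsto (fun t : ℝ => ∫ x : ℝ, w x ^ 2 *
        ‖𝓕.symm (mulLp (fun k : ℝ => cexp (-(I * t * k ^ 2))) (𝓕 φ)) x‖ ^ 2) atTop (𝓝 0) :=
  tendsto_integral_sq_mul_norm_sq (f := fun t => freeEvolution 𝓕 t (𝓕 φ)) hw hB hw₀
    (fun t => ((freeEvolution 𝓕 t).norm_map _).le) (tendsto_setIntegral_freeEvolution h𝓕 hφ)

/-- Let `μ` be a Borel probability measure on `ℝ`, `a ∈ ℝ`, and let
`φ ∈ L²(ℝ)` have only non-positive momenta, `(Fφ)(k) = 0` for a.e. `k > 0`. With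
`φ_t := e^{-itH₀}φ = F*(e^{-itk²} Fφ)` the freely evolved state, the localization
probability `∫ μ([a−x,∞))² |φ_t(x)|² dx` tends to `0` as `t → +∞`; that is, the localization
observable `E = μ * E^Q` satisfies `s-lim_{t→∞} E([a,∞)) e^{-itH₀} P̌₋ = 0`. -/
theorem statement10 (μ : Measure ℝ) [IsProbabilityMeasure μ] (a : ℝ)
    (𝓕 : H2 ≃ₗᵢ[ℂ] H2) (h𝓕 : IsFourier 𝓕) (φ : H2)
    (hφ : ∀ᵐ k ∂(volume.restrict (Set.Ioi (0 : ℝ))), (𝓕 φ) k = 0) :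
    Tendsto (fun t : ℝ => ∫ x : ℝ, (μ (Set.Ici (a - x))).toReal ^ 2 *
        ‖(𝓕.symm (mulLp (fun k : ℝ => Complex.exp (-(Complex.I * t * k ^ 2))) (𝓕 φ))) x‖ ^ 2)
      atTop (nhds 0) :=
  statement10_general (monotone_measureReal_Ici_sub μ a).measurable.aestronglyMeasurable
    (fun _ => (abs_of_nonneg measureReal_nonneg).trans_le measureReal_le_one)
    (tendsto_measureReal_Ici_sub_atBot μ a) 𝓕 h𝓕 φ hφ
end
end

section
/- Let x₀ < x₁ be real numbers. Let T, R_l, R_r : ℝ → ℂ satisfy T(−k) = conj(T(k)), R_l(−k) = conj(R_l(k)), R_r(−k) = conj(R_r(k)), and suppose that for every k ∈ ℝ the 2×2 matrix [[T(k), R_l(k)], [R_r(k), T(k)]] is unitary. Let φ₁, φ₂ : ℝ × ℝ → ℂ satisfy, for every k ∈ ℝ: φ₁(x,k) = R_l(k)e^{-ikx} + e^{ikx} for x ≤ x₀ and φ₁(x,k) = T(k)e^{ikx} for x ≥ x₁; φ₂(x,k) = T(k)e^{-ikx} for x ≤ x₀ and φ₂(x,k) = R_r(k)e^{ikx} + e^{-ikx}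 for x ≥ x₁. Let ψ₀ : ℝ → ℂ be a Schwartz function supported in (−∞, x₀], let t ∈ ℝ, and set (k,ψ₀)_i := (2π)^{-1/2} ∫_ℝ conj(φ_i(y,k)) ψ₀(y) dy and u(x) := (2π)^{-1/2} ∫_ℝ (1/2)[(k,ψ₀)_1 φ₁(x,k) + (k,ψ₀)_2 φ₂(x,k)] e^{-itk²} dk. Then for every x ≥ x₁, u(x) = (2π)^{-1/2} ∫_ℝ e^{ikx} T(k) (Fψ₀)(k) e^{-itk²} dk. -/
open Complex Filter Set MeasureTheory

noncomputable section

/-!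
On the support of `ψ₀` the eigenfunctions are combinations of `e^{±ikx}`, so their coefficients are
`conj R_l(k) Fψ₀(-k) + Fψ₀(k)` and `conj T(k) Fψ₀(-k)`. To the right of the scatterer the terms in
`e^{ikx} Fψ₀(-k)` carry the factor `conj R_l T + conj T R_r`, which vanishes because the columns of
the scattering matrix are orthogonal. By the symmetry of `T`, what remains is the even part in `k`
of `e^{ikx} T(k) Fψ₀(k) e^{-itk²}`, and a function has the same integral as its even part.
-/

open scoped ComplexConjugate FourierTransform

theorem integrable_cexp_I_mul {α : Type*} [MeasurableSpace α] {μ : Measure α} {f : α → ℂ}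
    (hf : Integrable f μ) {θ : α → ℝ} (hθ : AEMeasurable θ μ) :
    Integrable (fun a ↦ cexp (I * θ a) * f a) μ := by
  refine hf.bdd_mul (c := 1) ?_ (.of_forall fun a ↦ (norm_exp_I_mul_ofReal _).le)
  exact (measurable_exp.comp_aemeasurable (by fun_prop)).aestronglyMeasurable

theorem integrable_mul_cexp_neg_I_mul_mul_sq {f : ℝ → ℂ} (hf : Integrable f) (t : ℝ) :
    Integrable fun k : ℝ ↦ f k * cexp (-(I * t * k ^ 2)) := by
  convert integrable_cexp_I_mul hf (θ := fun k ↦ -(t * k ^ 2)) (by fun_prop) using 2 with k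
  push_cast
  ring_nf

theorem conj_cexp_I_mul_mul (k x : ℝ) : conj (cexp (I * k * x)) = cexp (-(I * k * x)) := by
  simp [← exp_conj]

theorem conj_cexp_neg_I_mul_mul (k x : ℝ) :
    conj (cexp (-(I * k * x))) = cexp (I * k * x) := by
  simp [← exp_conj]

theorem integral_half_mul_add_comp_neg {f : ℝ → ℂ} (hf : Integrable f) :
    ∫ k, (1 / 2 : ℂ) * (f k + f (-k)) = ∫ k, f k := by
  rw [integral_const_mul, integral_add hf hf.comp_neg, integral_neg_eq_self]
  ring

theorem star_mul_add_star_mul_eq_zero_of_mem_unitaryGroup {R : Type*} [CommRing R] [StarRing R]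
    {a b c d : R} (hU : Matrix.of ![![a, b], ![c, d]] ∈ Matrix.unitaryGroup (Fin 2) R) :
    star b * a + star d * c = 0 := by
  have columns := congrFun₂ (Matrix.mem_unitaryGroup_iff'.1 hU) 1 0
  simpa [Matrix.mul_apply, Fin.sum_univ_two, Matrix.star_apply] using columns

/-- The Fourier transform in the normalization `(2π)^{-1/2} ∫ e^{-iky} ψ(y) dy`, in which it is
unitary on `L²(ℝ)`; Mathlib's `𝓕` has the factor `2π` in the exponent instead. -/
def unitaryFourier (ψ : ℝ → ℂ) (k : ℝ) : ℂ :=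
  (Real.sqrt (2 * Real.pi) : ℂ)⁻¹ * ∫ y : ℝ, cexp (-(I * k * y)) * ψ y

theorem unitaryFourier_eq_fourier (ψ : ℝ → ℂ) (k : ℝ) :
    unitaryFourier ψ k = (Real.sqrt (2 * Real.pi) : ℂ)⁻¹ * 𝓕 ψ (k * (2 * Real.pi)⁻¹) := by
  have pi_ne_zero : (Real.pi : ℂ) ≠ 0 := ofReal_ne_zero.2 Real.pi_ne_zero
  rw [unitaryFourier, Real.fourier_eq']
  congr! 5 with y
  simp only [neg_mul, mul_inv_rev, RCLike.inner_apply, Real.ringHom_apply, ofReal_neg, ofReal_mul,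
    ofReal_ofNat, ofReal_inv, neg_inj]
  field_simp

theorem integrable_unitaryFourier {ψ : ℝ → ℂ} (hψ : Integrable (𝓕 ψ)) :
    Integrable (unitaryFourier ψ) := by
  simp only [funext (unitaryFourier_eq_fourier ψ)]
  exact (hψ.comp_mul_right' (by positivity)).const_mul _

theorem integrable_unitaryFourier_schwartzMap (ψ : SchwartzMap ℝ ℂ) :
    Integrable (unitaryFourier ψ) := by
  have integrable_fourier : Integrable (𝓕 ψ : SchwartzMap ℝ ℂ) := SchwartzMap.integrable _
  rw [SchwartzMap.fourier_coe] at integrable_fourier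
  exact integrable_unitaryFourier integrable_fourier

/-- The coefficient `(k, ψ) = (2π)^{-1/2} ∫ conj (φ(y, k)) ψ(y) dy` of `ψ` in the expansion with
respect to a family `φ` of generalized eigenfunctions, where `φ y k` is the value at position `y`
of the eigenfunction with momentum `k`. -/
def eigenCoeff (φ : ℝ → ℝ → ℂ) (ψ : ℝ → ℂ) (k : ℝ) : ℂ :=
  (Real.sqrt (2 * Real.pi) : ℂ)⁻¹ * ∫ y : ℝ, conj (φ y k) * ψ y

theorem eigenCoeff_eq_of_eqOn_support {φ : ℝ → ℝ → ℂ} {ψ : ℝ → ℂ} (hψ : Integrable ψ)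
    {k : ℝ} {a b : ℂ}
    (hφ : EqOn (φ · k) (fun y ↦ a * cexp (-(I * k * y)) + b * cexp (I * k * y))
      (Function.support ψ)) :
    eigenCoeff φ ψ k = conj a * unitaryFourier ψ (-k) + conj b * unitaryFourier ψ k := by
  have integrable_wave (q : ℝ) : Integrable fun y : ℝ ↦ cexp (-(I * q * y)) * ψ y := by
    simpa [mul_assoc] using integrable_cexp_I_mul hψ (θ := fun y ↦ -(q * y)) (by fun_prop)
  have integrand_eq (y : ℝ) : conj (φ y k) * ψ y =
      conj a * (cexp (-(I * (-k : ℝ) * y)) * ψ y) + conj b * (cexp (-(I * k * y)) * ψ y) := by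
    by_cases hy : ψ y = 0
    · simp [hy]
    · have hφy : φ y k = a * cexp (-(I * k * y)) + b * cexp (I * k * y) := hφ hy
      rw [hφy, map_add, map_mul, map_mul, conj_cexp_I_mul_mul, conj_cexp_neg_I_mul_mul]
      push_cast
      ring_nf
  simp only [eigenCoeff, unitaryFourier, integrand_eq]
  rw [integral_add ((integrable_wave _).const_mul _) ((integrable_wave _).const_mul _),
    integral_const_mul, integral_const_mul]
  ring

theorem statement13_general (x₀ x₁ : ℝ) (T Rl Rr : ℝ → ℂ)
    (hTsymm : ∀ k, T (-k) = conj (T k))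
    (horth : ∀ k, conj (Rl k) * T k + conj (T k) * Rr k = 0)
    (φ₁ φ₂ : ℝ → ℝ → ℂ)
    (hφ₁l : ∀ k x : ℝ, x ≤ x₀ → φ₁ x k = Rl k * cexp (-(I * k * x)) + cexp (I * k * x))
    (hφ₁r : ∀ k x : ℝ, x₁ ≤ x → φ₁ x k = T k * cexp (I * k * x))
    (hφ₂l : ∀ k x : ℝ, x ≤ x₀ → φ₂ x k = T k * cexp (-(I * k * x)))
    (hφ₂r : ∀ k x : ℝ, x₁ ≤ x → φ₂ x k = Rr k * cexp (I * k * x) + cexp (-(I * k * x)))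
    (ψ : ℝ → ℂ) (hψ : Integrable ψ) (hsupp : ∀ x, x₀ < x → ψ x = 0)
    (m : ℝ → ℂ) (hm : m.Even) (hint : Integrable fun k ↦ T k * unitaryFourier ψ k * m k)
    (x : ℝ) (hx : x₁ ≤ x) :
    ∫ k, (1 / 2 : ℂ) * (eigenCoeff φ₁ ψ k * φ₁ x k + eigenCoeff φ₂ ψ k * φ₂ x k) * m k =
      ∫ k : ℝ, cexp (I * k * x) * T k * unitaryFourier ψ k * m k := by
  have support_le {y : ℝ} (hy : y ∈ Function.support ψ) : y ≤ x₀ :=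
    not_lt.1 fun h ↦ hy (hsupp y h)
  have coeff₁ (k : ℝ) :
      eigenCoeff φ₁ ψ k = conj (Rl k) * unitaryFourier ψ (-k) + unitaryFourier ψ k := by
    simpa using eigenCoeff_eq_of_eqOn_support hψ (a := Rl k) (b := 1) fun y hy ↦ by
      simpa using hφ₁l k y (support_le hy)
  have coeff₂ (k : ℝ) : eigenCoeff φ₂ ψ k = conj (T k) * unitaryFourier ψ (-k) := by
    simpa using eigenCoeff_eq_of_eqOn_support hψ (a := T k) (b := 0) fun y hy ↦ by
      simpa using hφ₂l k y (support_le hy)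
  let transmitted (k : ℝ) : ℂ := cexp (I * k * x) * T k * unitaryFourier ψ k * m k
  have integrable_transmitted : Integrable transmitted := by
    simpa [transmitted, mul_assoc] using
      integrable_cexp_I_mul hint (θ := fun k ↦ k * x) (by fun_prop)
  have transmitted_neg (k : ℝ) : transmitted (-k) =
      cexp (-(I * k * x)) * conj (T k) * unitaryFourier ψ (-k) * m k := by
    simp [transmitted, hTsymm, hm k]
  rw [← integral_half_mul_add_comp_neg integrable_transmitted]
  congr! 2 with k
  rw [transmitted_neg, coeff₁, coeff₂, hφ₁r k x hx, hφ₂r k x hx]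
  linear_combination
    (1 / 2 : ℂ) * unitaryFourier ψ (-k) * cexp (I * k * x) * m k * horth k

/-- Eigenfunction-expansion computation: for a Schwartz initial state `ψ₀`
supported in `(−∞, x₀]`, and scattering solutions `φ₁, φ₂` with transmission amplitude `T`
and reflection amplitudes `R_l, R_r` forming a unitary scattering matrix with the stated
conjugation symmetries, the evolved wave
`u(x) = (2π)^{-1/2} ∫ ½[(k,ψ₀)₁ φ₁(x,k) + (k,ψ₀)₂ φ₂(x,k)] e^{-itk²} dk`
equals `(2π)^{-1/2} ∫ e^{ikx} T(k) (Fψ₀)(k) e^{-itk²} dk` for every `x ≥ x₁`. -/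
theorem statement13 (x₀ x₁ : ℝ) (hx : x₀ < x₁)
    (T Rl Rr : ℝ → ℂ) (hTm : Measurable T) (hRlm : Measurable Rl) (hRrm : Measurable Rr)
    (hTsymm : ∀ k : ℝ, T (-k) = starRingEnd ℂ (T k))
    (hRlsymm : ∀ k : ℝ, Rl (-k) = starRingEnd ℂ (Rl k))
    (hRrsymm : ∀ k : ℝ, Rr (-k) = starRingEnd ℂ (Rr k))
    (hunit : ∀ k : ℝ,
      Matrix.of ![![T k, Rl k], ![Rr k, T k]] ∈ Matrix.unitaryGroup (Fin 2) ℂ)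
    (φ₁ φ₂ : ℝ → ℝ → ℂ)
    (hφ₁l : ∀ k : ℝ, ∀ x : ℝ, x ≤ x₀ →
      φ₁ x k = Rl k * Complex.exp (-(Complex.I * k * x)) + Complex.exp (Complex.I * k * x))
    (hφ₁r : ∀ k : ℝ, ∀ x : ℝ, x₁ ≤ x → φ₁ x k = T k * Complex.exp (Complex.I * k * x))
    (hφ₂l : ∀ k : ℝ, ∀ x : ℝ, x ≤ x₀ → φ₂ x k = T k * Complex.exp (-(Complex.I * k * x)))
    (hφ₂r : ∀ k : ℝ, ∀ x : ℝ, x₁ ≤ x →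
      φ₂ x k = Rr k * Complex.exp (Complex.I * k * x) + Complex.exp (-(Complex.I * k * x)))
    (ψ₀ : SchwartzMap ℝ ℂ) (hsupp : ∀ x : ℝ, x₀ < x → ψ₀ x = 0)
    (t : ℝ) (c₁ c₂ : ℝ → ℂ)
    (hc₁ : ∀ k : ℝ, c₁ k = (Real.sqrt (2 * Real.pi) : ℂ)⁻¹ *
      ∫ y : ℝ, starRingEnd ℂ (φ₁ y k) * ψ₀ y)
    (hc₂ : ∀ k : ℝ, c₂ k = (Real.sqrt (2 * Real.pi) : ℂ)⁻¹ *
      ∫ y : ℝ, starRingEnd ℂ (φ₂ y k) * ψ₀ y)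
    (u : ℝ → ℂ)
    (hu : ∀ x : ℝ, u x = (Real.sqrt (2 * Real.pi) : ℂ)⁻¹ *
      ∫ k : ℝ, (1 / 2 : ℂ) * (c₁ k * φ₁ x k + c₂ k * φ₂ x k) *
        Complex.exp (-(Complex.I * t * k ^ 2)))
    (x : ℝ) (hx1 : x₁ ≤ x) :
    u x = (Real.sqrt (2 * Real.pi) : ℂ)⁻¹ *
      ∫ k : ℝ, Complex.exp (Complex.I * k * x) * T k *
        ((Real.sqrt (2 * Real.pi) : ℂ)⁻¹ *
          ∫ y : ℝ, Complex.exp (-(Complex.I * k * y)) * ψ₀ y) *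
        Complex.exp (-(Complex.I * t * k ^ 2)) := by
  have horth (k : ℝ) : starRingEnd ℂ (Rl k) * T k + starRingEnd ℂ (T k) * Rr k = 0 :=
    star_mul_add_star_mul_eq_zero_of_mem_unitaryGroup (hunit k)
  have hTF : Integrable fun k ↦ T k * unitaryFourier ψ₀ k :=
    (integrable_unitaryFourier_schwartzMap ψ₀).bdd_mul hTm.aestronglyMeasurable
      (.of_forall fun k ↦ entry_norm_bound_of_unitary (hunit k) 0 0)
  rw [hu, funext hc₁, funext hc₂]
  exact congrArg _ <| statement13_general x₀ x₁ T Rl Rr hTsymm horth φ₁ φ₂ hφ₁l hφ₁r hφ₂l hφ₂r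
    ψ₀ ψ₀.integrable hsupp _ (fun k ↦ by simp) (integrable_mul_cexp_neg_I_mul_mul_sq hTF t) x hx1
end
end
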